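/- arXiv:1110.1713 — 3 statements merged into one kernel-verified Lean document; each statement's English description precedes it below -/
import Mathlib

section
/- For the family f_L = χ_{R_L} − χ_{R₀} (L > 2), one has lim_{L→∞} ‖f_L‖_{H¹} / ‖M f_L‖₁ = +∞; consequently there is no constant C with ‖f‖_{H¹} ≤ C‖Mf‖₁ for all f ∈ H¹. -/
open MeasureTheory Real Filter Set
open scoped ENNReal

noncomputable section

/-- The group `G = ℝ² ⋊ ℝ⁺`, realized as triples `(x₁, x₂, a)` (only `a > 0` is relevant). -/
abbrev G : Type := ℝ × ℝ × ℝ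

/-- Group product `(x₁,x₂,a)·(x₁',x₂',a') = (x₁+a x₁', x₂+a x₂', a a')`. -/
def gMul (x y : G) : G := (x.1 + x.2.2 * y.1, x.2.1 + x.2.2 * y.2.1, x.2.2 * y.2.2)

/-- Group inverse `(x₁,x₂,a)⁻¹ = (−x₁/a, −x₂/a, 1/a)`. -/
def gInv (x : G) : G := (-x.1 / x.2.2, -x.2.1 / x.2.2, 1 / x.2.2)

/-- The identity `e = (0,0,1)`. -/
def gE : G := (0, 0, 1)

/-- The right Haar measure `dρ = a⁻¹ dx₁ dx₂ da` (supported where `a > 0`). -/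
def ρG : Measure G :=
  (volume : Measure G).withDensity fun x => ENNReal.ofReal (if 0 < x.2.2 then x.2.2⁻¹ else 0)

/-- The modular function `δ(x₁,x₂,a) = a⁻²`. -/
def deltaG (x : G) : ℝ := (x.2.2 ^ 2)⁻¹

/-- `|x| = √(x₁² + x₂²)`. -/
def normG (x : G) : ℝ := Real.sqrt (x.1 ^ 2 + x.2.1 ^ 2)

/-- `cosh r(x) = (a + a⁻¹ + a⁻¹|x|²)/2`. -/
def coshArg (x : G) : ℝ := (x.2.2 + x.2.2⁻¹ + x.2.2⁻¹ * (x.1 ^ 2 + x.2.1 ^ 2)) / 2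

/-- `r(x) ≥ 0` is determined by `cosh r(x) = coshArg x`; explicitly `r = arcosh (coshArg x)`. -/
def rG (x : G) : ℝ := Real.log (coshArg x + Real.sqrt (coshArg x ^ 2 - 1))

/-- The left-invariant distance `d(x,y) = r(x⁻¹y)`. -/
def dG (x y : G) : ℝ := rG (gMul (gInv x) y)

/-- The heat kernel
`p_t(x) = (8π^{3/2})⁻¹ δ(x)^{1/2} (r(x)/sinh r(x)) t^{−3/2} exp(−r(x)²/(4t))`,
with `r/sinh r := 1` at `x = e`. -/
def heatK (t : ℝ) (x : G) : ℝ :=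
  (8 * Real.pi ^ ((3 : ℝ)/2))⁻¹ * Real.sqrt (deltaG x) *
    (if rG x = 0 then 1 else rG x / Real.sinh (rG x)) *
    t ^ (-(3 : ℝ)/2) * Real.exp (-(rG x ^ 2) / (4 * t))

/-- Convolution `f ∗ p_t(x) = ∫ f(xy⁻¹) p_t(y) dρ(y)`. -/
def convHeat (f : G → ℝ) (t : ℝ) (x : G) : ℝ := ∫ y, f (gMul x (gInv y)) * heatK t y ∂ρG

/-- The heat maximal operator `Mf(x) = sup_{t>0} |f ∗ p_t(x)|` (valued in `ℝ≥0∞`). -/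
def maxHeat (f : G → ℝ) (x : G) : ℝ≥0∞ :=
  ⨆ (t : ℝ) (_ : 0 < t), ENNReal.ofReal |convHeat f t x|

/-- Calderón–Zygmund sets. -/
def IsCZ (R : Set G) : Prop :=
  ∃ c : G, ∃ L r : ℝ, 0 < c.2.2 ∧ 0 < L ∧ 0 < r ∧
    R = Set.Icc (c.1 - L/2) (c.1 + L/2) ×ˢ
        (Set.Icc (c.2.1 - L/2) (c.2.1 + L/2) ×ˢ
         Set.Icc (c.2.2 * Real.exp (-r)) (c.2.2 * Real.exp r)) ∧
    (r < 1 → Real.exp 2 * c.2.2 * r ≤ L ∧ L < Real.exp 8 * c.2.2 * r) ∧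
    (1 ≤ r → c.2.2 * Real.exp (2*r) ≤ L ∧ L < c.2.2 * Real.exp (8*r))

/-- Atoms: `A ∈ L¹(ρ)` supported in a Calderón–Zygmund set `R`, with
`‖A‖_∞ ≤ ρ(R)⁻¹` and `∫ A dρ = 0`. -/
def IsAtomG (A : G → ℝ) : Prop :=
  Integrable A ρG ∧
  ∃ R : Set G, IsCZ R ∧ (∀ x ∉ R, A x = 0) ∧
    eLpNorm A ⊤ ρG ≤ (ρG R)⁻¹ ∧
    ∫ x, A x ∂ρG = 0

/-- `f = Σ_j lam_j A_j` with atoms `A_j`, `Σ_j |lam_j| < ∞`, converging in `L¹(ρ)`. -/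
def IsH1Decomp (f : G → ℝ) (lam : ℕ → ℝ) (A : ℕ → G → ℝ) : Prop :=
  (∀ j, IsAtomG (A j)) ∧ Summable (fun j => |lam j|) ∧
  Tendsto (fun N => eLpNorm (fun x => f x - ∑ j ∈ Finset.range N, lam j * A j x) 1 ρG)
    atTop (nhds 0)

/-- The Hardy space `H¹`. -/
def MemH1 (f : G → ℝ) : Prop :=
  Integrable f ρG ∧ ∃ lam A, IsH1Decomp f lam A

/-- `‖f‖_{H¹} = inf Σ_j |lam_j|` over all atomic decompositions. -/
def H1norm (f : G → ℝ) : ℝ :=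
  sInf {s | ∃ lam A, IsH1Decomp f lam A ∧ s = ∑' j, |lam j|}

/-- The left-invariant vector field `X₀ = a ∂_a`. -/
def X0 (f : G → ℝ) (x : G) : ℝ := x.2.2 * deriv (fun s => f (x.1, x.2.1, s)) x.2.2

/-- The left-invariant vector field `X₁ = a ∂_{x₁}`. -/
def X1 (f : G → ℝ) (x : G) : ℝ := x.2.2 * deriv (fun s => f (s, x.2.1, x.2.2)) x.1

/-- The left-invariant vector field `X₂ = a ∂_{x₂}`. -/
def X2 (f : G → ℝ) (x : G) : ℝ := x.2.2 * deriv (fun s => f (x.1, s, x.2.2)) x.2.1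

/-- `‖∇p_t(x)‖`, the Euclidean norm of `(X₀p_t, X₁p_t, X₂p_t)` at `x`. -/
def gradHeatNorm (t : ℝ) (x : G) : ℝ :=
  Real.sqrt (X0 (heatK t) x ^ 2 + X1 (heatK t) x ^ 2 + X2 (heatK t) x ^ 2)

/-- The Poisson kernel `q_t(x) = π⁻² δ(x)^{1/2} (r(x)/sinh r(x)) · t/(t²+r(x)²)²`. -/
def poissonK (t : ℝ) (x : G) : ℝ :=
  (Real.pi ^ 2)⁻¹ * Real.sqrt (deltaG x) *
    (if rG x = 0 then 1 else rG x / Real.sinh (rG x)) *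
    (t / (t ^ 2 + rG x ^ 2) ^ 2)

/-- Convolution `f ∗ q_t(x) = ∫ f(xy⁻¹) q_t(y) dρ(y)`. -/
def convPoisson (f : G → ℝ) (t : ℝ) (x : G) : ℝ := ∫ y, f (gMul x (gInv y)) * poissonK t y ∂ρG

/-- The Poisson maximal operator `M̃f(x) = sup_{t>0} |f ∗ q_t(x)|`. -/
def maxPoisson (f : G → ℝ) (x : G) : ℝ≥0∞ :=
  ⨆ (t : ℝ) (_ : 0 < t), ENNReal.ofReal |convPoisson f t x|

/-- `G_{r₁}(x) = sup_{z ∈ B(x,r₁/2)} sup_{t>0} ‖∇p_t(z)‖`. -/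
def Gsup (r1 : ℝ) (x : G) : ℝ≥0∞ :=
  ⨆ (z : G) (_ : 0 < z.2.2 ∧ dG x z < r1 / 2) (t : ℝ) (_ : 0 < t),
    ENNReal.ofReal (gradHeatNorm t z)

/-- `R₀ = [−1,1]×[−1,1]×[e⁻¹,e]`. -/
def R0set : Set G :=
  Set.Icc (-1 : ℝ) 1 ×ˢ (Set.Icc (-1 : ℝ) 1 ×ˢ Set.Icc (Real.exp (-1)) (Real.exp 1))

/-- `R_L = [L−1,L+1]×[−1,1]×[e⁻¹,e]`. -/
def RLset (L : ℝ) : Set G :=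
  Set.Icc (L - 1) (L + 1) ×ˢ (Set.Icc (-1 : ℝ) 1 ×ˢ Set.Icc (Real.exp (-1)) (Real.exp 1))

/-- `f_L = χ_{R_L} − χ_{R₀}`. -/
def fL (L : ℝ) : G → ℝ := fun x =>
  (RLset L).indicator (fun _ => (1 : ℝ)) x - R0set.indicator (fun _ => (1 : ℝ)) x

/-- The mean of `g` over `R` with respect to `ρ`. -/
def czMean (g : G → ℝ) (R : Set G) : ℝ := (∫ x in R, g x ∂ρG) / (ρG R).toReal

/-- `‖g‖_{BMO} = sup_R ρ(R)⁻¹ ∫_R |g − g_R| dρ` over Calderón–Zygmund sets `R`. -/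
def czBMO (g : G → ℝ) : ℝ≥0∞ :=
  ⨆ (R : Set G) (_ : IsCZ R),
    (ρG R)⁻¹ * ∫⁻ x in R, ENNReal.ofReal |g x - czMean g R| ∂ρG

/-- `‖h‖_{BMO(ℝ)} = sup_Q |Q|⁻¹ ∫_Q |h − h_Q|` over bounded intervals `Q ⊂ ℝ`. -/
def lineBMO (h : ℝ → ℝ) : ℝ≥0∞ :=
  ⨆ (a : ℝ) (b : ℝ) (_ : a < b),
    (ENNReal.ofReal (b - a))⁻¹ *
      ∫⁻ s in Set.Icc a b, ENNReal.ofReal |h s - (∫ u in Set.Icc a b, h u) / (b - a)|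

/-- `2R₀ = [−2,2]×[−2,2]×[e⁻²,e²]`. -/
def twoR0set : Set G :=
  Set.Icc (-2 : ℝ) 2 ×ˢ (Set.Icc (-2 : ℝ) 2 ×ˢ Set.Icc (Real.exp (-2)) (Real.exp 2))

/-- The set `{x₁ > 3, |x₂| < 1, e⁻¹ < a < e}`. -/
def domSpecial : Set G :=
  {x : G | 3 < x.1 ∧ |x.2.1| < 1 ∧ Real.exp (-1) < x.2.2 ∧ x.2.2 < Real.exp 1}

/-- The function equal to `1/(x₁ (log x₁)^{3/2})` on `{x₁ > 3, |x₂| < 1, e⁻¹ < a < e}`,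
to `c₀` on `R₀`, and `0` elsewhere. -/
def fSpecial (c0 : ℝ) : G → ℝ := fun x =>
  domSpecial.indicator (fun y => (y.1 * Real.log y.1 ^ ((3 : ℝ)/2))⁻¹) x
    + R0set.indicator (fun _ => c0) x

lemma rG_eq (y : G) : rG y = Real.arcosh (coshArg y) := rfl

def psi (r : ℝ) : ℝ := if r = 0 then 1 else r / Real.sinh r

lemma sinh_convex : ConvexOn ℝ (Set.Ici 0) Real.sinh := by
  apply MonotoneOn.convexOn_of_deriv (convex_Ici 0) Real.continuous_sinh.continuousOn
    Real.differentiable_sinh.differentiableOn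
  rw [Real.deriv_sinh, interior_Ici]
  intro a ha b hb hab
  exact Real.cosh_le_cosh.2 (by rw [abs_of_pos ha, abs_of_pos hb]; exact hab)

lemma sinh_ge_self {r : ℝ} (hr : 0 ≤ r) : r ≤ Real.sinh r := Real.self_le_sinh_iff.2 hr

lemma sinh_slope {r r' : ℝ} (hr : 0 ≤ r) (h : r ≤ r') :
    Real.sinh r * r' ≤ Real.sinh r' * r := by
  rcases eq_or_lt_of_le (hr.trans h) with h0 | h0
  · have : r = 0 := by linarith
    subst this; simp
  have ha : 0 ≤ r / r' := by positivity
  have hb : 0 ≤ 1 - r / r' := by rw [sub_nonneg]; exact (div_le_one h0).2 h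
  have := sinh_convex.2 (show r' ∈ Set.Ici (0:ℝ) from h0.le) (show (0:ℝ) ∈ Set.Ici (0:ℝ) by simp)
    ha hb (by ring)
  simp only [smul_eq_mul, mul_zero, add_zero, Real.sinh_zero] at this
  rw [div_mul_cancel₀ _ h0.ne'] at this
  rw [div_mul_eq_mul_div, le_div_iff₀ h0] at this
  linarith

lemma psi_pos {r : ℝ} (hr : 0 ≤ r) : 0 < psi r := by
  unfold psi
  split_ifs with h
  · exact one_pos
  · have : 0 < r := lt_of_le_of_ne hr (Ne.symm h)
    exact div_pos this (Real.sinh_pos_iff.2 this)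

lemma psi_anti {r r' : ℝ} (hr : 0 ≤ r) (h : r ≤ r') : psi r' ≤ psi r := by
  unfold psi
  by_cases h' : r' = 0
  · have : r = 0 := by linarith
    simp [h', this]
  have hp' : 0 < r' := lt_of_le_of_ne (hr.trans h) (Ne.symm h')
  have hs' := Real.sinh_pos_iff.2 hp'
  rw [if_neg h']
  split_ifs with h0
  · rw [div_le_one hs']; exact sinh_ge_self hp'.le
  · have hp : 0 < r := lt_of_le_of_ne hr (Ne.symm h0)
    have hs := Real.sinh_pos_iff.2 hp
    rw [div_le_div_iff₀ hs' hs]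
    have := sinh_slope hr h
    linarith

lemma psi_le_one {r : ℝ} (hr : 0 ≤ r) : psi r ≤ 1 := by
  have := psi_anti le_rfl hr
  simpa [psi] using this

lemma sinh_sub_le {r r' : ℝ} (hr : 0 ≤ r) (h : r ≤ r') :
    Real.sinh r' - Real.sinh r ≤ (r' - r) * Real.cosh r' := by
  have := (convex_Icc r r').image_sub_le_mul_sub_of_deriv_le (f := Real.sinh) (C := Real.cosh r')
    Real.continuous_sinh.continuousOn Real.differentiable_sinh.differentiableOn (by
      intro x hx
      rw [interior_Icc] at hx
      rw [Real.deriv_sinh]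
      exact Real.cosh_le_cosh.2 (by
        rw [abs_of_nonneg (hr.trans hx.1.le), abs_of_nonneg (hr.trans h)]; exact hx.2.le))
    r (left_mem_Icc.2 h) r' (right_mem_Icc.2 h) h
  linarith

lemma cosh_sub_ge {r r' : ℝ} (h : r ≤ r') :
    (r' - r) * Real.sinh r ≤ Real.cosh r' - Real.cosh r := by
  have := (convex_Icc r r').mul_sub_le_image_sub_of_le_deriv (f := Real.cosh) (C := Real.sinh r)
    Real.continuous_cosh.continuousOn Real.differentiable_cosh.differentiableOn (by
      intro x hx
      rw [interior_Icc] at hx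
      rw [Real.deriv_cosh]
      exact Real.sinh_le_sinh.2 hx.1.le)
    r (left_mem_Icc.2 h) r' (right_mem_Icc.2 h) h
  linarith

/-- time factor -/
def tE (t r : ℝ) : ℝ := t ^ (-(3 : ℝ)/2) * Real.exp (-(r ^ 2) / (4 * t))

lemma rpow_t {t : ℝ} (ht : 0 < t) : t ^ (-(3 : ℝ)/2) = (Real.sqrt t ^ 3)⁻¹ := by
  have h1 : (Real.sqrt t ^ 3) = t ^ ((3:ℝ)/2) := by
    rw [Real.sqrt_eq_rpow, ← Real.rpow_natCast, ← Real.rpow_mul ht.le]; norm_num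
  rw [h1, ← Real.rpow_neg ht.le]; norm_num

lemma tE_pos {t r : ℝ} (ht : 0 < t) : 0 < tE t r := by unfold tE; positivity

lemma cube_exp {w : ℝ} : w ^ 3 ≤ 16 * Real.exp (w ^ 2 / 4) := by
  have h := Real.quadratic_le_exp_of_nonneg (x := w ^ 2 / 4) (by positivity)
  nlinarith [sq_nonneg (w ^ 2 / 4 * 2 - w), sq_nonneg (w-2), sq_nonneg (w ^ 2/4), sq_nonneg w]

lemma fifth_exp {w : ℝ} (hw : 0 ≤ w) : w ^ 5 ≤ 400 * Real.exp (w ^ 2 / 4) := by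
  have h := Real.pow_div_factorial_le_exp (w ^ 2 / 4) (by positivity) 3
  have h1 : 1 ≤ Real.exp (w ^ 2 / 4) := Real.one_le_exp (by positivity)
  have h3 : w ^ 6 ≤ 384 * Real.exp (w ^ 2 / 4) := by
    norm_num [Nat.factorial] at h
    have e : (w ^ 2 / 4) ^ 3 = w ^ 6 / 64 := by ring
    rw [e] at h; linarith
  by_cases hw1 : w ≤ 1
  · have : w ^ 5 ≤ 1 := pow_le_one₀ hw hw1
    linarith
  · have : w ^ 5 ≤ w ^ 6 := pow_le_pow_right₀ (by linarith) (by norm_num)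
    linarith

lemma tE_le {t r : ℝ} (ht : 0 < t) (hr : 0 < r) : tE t r ≤ 16 / r ^ 3 := by
  unfold tE
  rw [rpow_t ht]
  set τ := Real.sqrt t with hτ
  have hτp : 0 < τ := Real.sqrt_pos.2 ht
  have htτ : t = τ ^ 2 := (Real.sq_sqrt ht.le).symm
  have h := cube_exp (w := r / τ)
  have e : -(r ^ 2) / (4 * t) = -((r / τ) ^ 2 / 4) := by
    rw [htτ]; field_simp
  rw [e, Real.exp_neg, ← mul_inv, le_div_iff₀ (by positivity), inv_mul_eq_div,
    div_le_iff₀ (by positivity)]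
  rw [div_pow, div_le_iff₀ (by positivity)] at h
  linarith

lemma tE_le' {t r : ℝ} (ht : 0 < t) (hr : 0 < r) : tE t r / t ≤ 400 / r ^ 5 := by
  unfold tE
  rw [rpow_t ht]
  set τ := Real.sqrt t with hτ
  have hτp : 0 < τ := Real.sqrt_pos.2 ht
  have htτ : t = τ ^ 2 := (Real.sq_sqrt ht.le).symm
  have h := fifth_exp (w := r / τ) (by positivity)
  have e : -(r ^ 2) / (4 * t) = -((r / τ) ^ 2 / 4) := by
    rw [htτ]; field_simp
  rw [e, Real.exp_neg, ← mul_inv, div_eq_mul_inv, ← mul_inv, le_div_iff₀ (by positivity),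
    inv_mul_eq_div, div_le_iff₀ (by positivity)]
  rw [div_pow, div_le_iff₀ (by positivity)] at h
  rw [htτ]
  linarith

lemma tE_diff {t r r' : ℝ} (ht : 0 < t) (hr : 0 < r) (h : r ≤ r') (h2 : r' ≤ 2 * r) :
    tE t r - tE t r' ≤ 300 * (r' - r) / r ^ 4 := by
  have h1 : tE t r' = tE t r * Real.exp (-((r' ^ 2 - r ^ 2) / (4 * t))) := by
    unfold tE
    rw [mul_assoc, ← Real.exp_add]
    congr 2
    field_simp; ring
  have h3 := Real.add_one_le_exp (-((r' ^ 2 - r ^ 2) / (4 * t)))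
  have h4 : tE t r - tE t r' ≤ tE t r * ((r' ^ 2 - r ^ 2) / (4 * t)) := by
    rw [h1]; nlinarith [tE_pos (r := r) ht]
  have h5 : tE t r * ((r' ^ 2 - r ^ 2) / (4 * t)) = tE t r / t * ((r' ^ 2 - r ^ 2) / 4) := by
    field_simp
  have h6 : (r' ^ 2 - r ^ 2) / 4 ≤ 3 / 4 * r * (r' - r) := by nlinarith
  have h7 := tE_le' ht hr
  have h8 : 0 < tE t r / t := div_pos (tE_pos ht) ht
  have h9 : 0 ≤ 3 / 4 * r * (r' - r) := by
    have := sub_nonneg.2 h; positivity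
  calc _ ≤ tE t r / t * ((r' ^ 2 - r ^ 2) / 4) := by rw [← h5]; exact h4
    _ ≤ tE t r / t * (3 / 4 * r * (r' - r)) := by gcongr
    _ ≤ 400 / r ^ 5 * (3 / 4 * r * (r' - r)) := by gcongr
    _ = 300 * (r' - r) / r ^ 4 := by field_simp; ring

lemma tE_anti {t r r' : ℝ} (ht : 0 < t) (hr : 0 ≤ r) (h : r ≤ r') : tE t r' ≤ tE t r := by
  unfold tE
  have : r ^ 2 ≤ r' ^ 2 := by gcongr
  gcongr

lemma tE_strict {t r r' : ℝ} (ht : 0 < t) (hr : 0 ≤ r) (h : r < r') : tE t r' < tE t r := by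
  unfold tE
  have : r ^ 2 < r' ^ 2 := by gcongr
  gcongr

/-- `psi * tE` difference bound. -/
lemma F_diff {t r r' : ℝ} (ht : 0 < t) (hr : 1 ≤ r) (h : r ≤ r') (h2 : r' ≤ 2 * r)
    (hc : Real.cosh r' ≤ 2 * Real.sinh r') :
    psi r * tE t r - psi r' * tE t r' ≤ 332 * (r' - r) / (r ^ 2 * Real.sinh r) := by
  have hr0 : 0 < r := by linarith
  have hr0' : 0 < r' := by linarith
  have hs := Real.sinh_pos_iff.2 hr0
  have hs' := Real.sinh_pos_iff.2 hr0'
  have e : psi r = r / Real.sinh r := by simp [psi, hr0.ne']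
  have e' : psi r' = r' / Real.sinh r' := by simp [psi, hr0'.ne']
  have d0 : 0 ≤ r' - r := sub_nonneg.2 h
  have h1 : psi r - psi r' ≤ 2 * (r' - r) * (r / Real.sinh r) := by
    have s1 : Real.sinh r' - Real.sinh r ≤ (r' - r) * (2 * Real.sinh r') :=
      (sinh_sub_le hr0.le h).trans (by gcongr)
    rw [e, e', div_sub_div _ _ hs.ne' hs'.ne', mul_div_assoc', div_le_div_iff₀ (by positivity) hs]
    have : r * Real.sinh r' - Real.sinh r * r' ≤ 2 * (r' - r) * r * Real.sinh r' := by
      nlinarith [mul_le_mul_of_nonneg_left s1 hr0.le]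
    nlinarith
  have h3 := tE_le ht hr0
  have h4 := tE_diff ht hr0 h h2
  have h5 := psi_anti hr0.le h
  have p1 : 0 ≤ tE t r - tE t r' := sub_nonneg.2 (tE_anti ht hr0.le h)
  have q0 : 0 < psi r' := psi_pos hr0'.le
  calc psi r * tE t r - psi r' * tE t r'
      = (psi r - psi r') * tE t r + psi r' * (tE t r - tE t r') := by ring
    _ ≤ (2 * (r' - r) * (r / Real.sinh r)) * (16 / r ^ 3)
        + (r / Real.sinh r) * (300 * (r' - r) / r ^ 4) := by
        apply add_le_add
        · apply mul_le_mul h1 h3 (tE_pos ht).le (by positivity)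
        · rw [← e]; exact mul_le_mul h5 h4 p1 (q0.le.trans h5)
    _ = (32 + 300 / r) * ((r' - r) / (r ^ 2 * Real.sinh r)) := by field_simp; ring
    _ ≤ 332 * ((r' - r) / (r ^ 2 * Real.sinh r)) := by
        gcongr
        have : 300 / r ≤ 300 := div_le_self (by norm_num) hr
        linarith
    _ = _ := by ring

def kap : ℝ := (8 * Real.pi ^ ((3 : ℝ)/2))⁻¹

lemma kap_pos : 0 < kap := by unfold kap; positivity
lemma kap_le : kap ≤ 1 := by
  unfold kap
  apply inv_le_one_of_one_le₀
  have : 1 ≤ Real.pi ^ ((3 : ℝ)/2) := Real.one_le_rpow (by linarith [Real.pi_gt_three]) (by norm_num)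
  linarith

lemma heatK_eq {t : ℝ} {y : G} (hs : 0 < y.2.2) :
    heatK t y = kap * (y.2.2)⁻¹ * (psi (rG y) * tE t (rG y)) := by
  unfold heatK kap tE psi deltaG
  rw [Real.sqrt_inv, Real.sqrt_sq hs.le]
  ring

lemma coshArg_eq {y : G} (hs : 0 < y.2.2) :
    coshArg y = (1 + y.2.2 ^ 2 + y.1 ^ 2 + y.2.1 ^ 2) / (2 * y.2.2) := by
  unfold coshArg; field_simp; ring

lemma one_le_coshArg {y : G} (hs : 0 < y.2.2) : 1 ≤ coshArg y := by
  rw [coshArg_eq hs, le_div_iff₀ (by positivity)]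
  nlinarith [sq_nonneg (y.2.2 - 1), sq_nonneg y.1, sq_nonneg y.2.1]

lemma cosh_rG {y : G} (hs : 0 < y.2.2) : Real.cosh (rG y) = coshArg y :=
  Real.cosh_arcosh (one_le_coshArg hs)

lemma rG_nonneg {y : G} (hs : 0 < y.2.2) : 0 ≤ rG y := Real.arcosh_nonneg (one_le_coshArg hs)

lemma heatK_nonneg {t : ℝ} (ht : 0 < t) (y : G) : 0 ≤ heatK t y := by
  unfold heatK
  have : 0 ≤ (if rG y = 0 then 1 else rG y / Real.sinh (rG y)) := by
    split_ifs
    · norm_num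
    · rcases le_total 0 (rG y) with h | h
      · exact div_nonneg h (Real.sinh_nonneg_iff.2 h)
      · exact div_nonneg_of_nonpos h (Real.sinh_nonpos_iff.2 h)
  positivity

lemma cosh_one_le_two : Real.cosh 1 ≤ 2 := by
  rw [Real.cosh_eq]
  have := Real.exp_one_lt_d9
  have h2 : Real.exp (-1) ≤ 1 := Real.exp_le_one_iff.2 (by norm_num)
  linarith

lemma one_le_of_cosh {r : ℝ} (hr : 0 ≤ r) (h : 2 ≤ Real.cosh r) : 1 ≤ r := by
  have := Real.cosh_le_cosh.1 (cosh_one_le_two.trans h)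
  rwa [abs_one, abs_of_nonneg hr] at this

lemma cosh_le_two_sinh {r : ℝ} (hr : 0 ≤ r) (h : 2 ≤ Real.cosh r) :
    Real.cosh r ≤ 2 * Real.sinh r := by
  have h1 := Real.cosh_sq r
  have h2 := Real.sinh_nonneg_iff.2 hr
  nlinarith

lemma log_cosh_le {r : ℝ} (hr : 0 ≤ r) : Real.log (Real.cosh r) ≤ r := by
  rw [Real.log_le_iff_le_exp (Real.cosh_pos r), Real.cosh_eq]
  have : Real.exp (-r) ≤ Real.exp r := Real.exp_le_exp.2 (by linarith)
  linarith

/-- nonlocal kernel bound -/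
lemma heatK_le {t : ℝ} (ht : 0 < t) {y : G} (hs : 0 < y.2.2) (hc : 2 ≤ coshArg y) :
    heatK t y ≤ 32 * (y.2.2)⁻¹ / (rG y ^ 2 * coshArg y) := by
  rw [heatK_eq hs]
  have hr0 := rG_nonneg hs
  have hcr := cosh_rG hs
  rw [← hcr] at hc ⊢
  set r := rG y
  have hr := one_le_of_cosh hr0 hc
  have hr0 : 0 < r := by linarith
  have hsh := cosh_le_two_sinh hr0.le hc
  have hsp := Real.sinh_pos_iff.2 hr0
  have h3 := tE_le ht hr0
  have e : psi r = r / Real.sinh r := by simp [psi, hr0.ne']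
  have hcp := Real.cosh_pos r
  calc kap * (y.2.2)⁻¹ * (psi r * tE t r) ≤ 1 * (y.2.2)⁻¹ * (r / (Real.cosh r / 2) * (16 / r ^ 3)) := by
        rw [e]
        have := (tE_pos (r := r) ht).le
        gcongr
        · exact kap_le
        · linarith
    _ = _ := by field_simp; norm_num

/-- nonlocal kernel difference bound (same height) -/
lemma heatK_diff_le {t : ℝ} (ht : 0 < t) {y y' : G} (hs : 0 < y.2.2) (he : y'.2.2 = y.2.2)
    (hc : 2 ≤ coshArg y) (hcc : coshArg y ≤ coshArg y')
    (hd : coshArg y' - coshArg y ≤ coshArg y / 2) :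
    |heatK t y' - heatK t y| ≤
      1400 * (y.2.2)⁻¹ * (coshArg y' - coshArg y) / (rG y ^ 2 * coshArg y ^ 2) := by
  have hs' : 0 < y'.2.2 := by rw [he]; exact hs
  rw [heatK_eq hs, heatK_eq hs', he]
  have hr0 := rG_nonneg hs
  have hr0' := rG_nonneg hs'
  have hcr := cosh_rG hs
  have hcr' := cosh_rG hs'
  rw [← hcr, ← hcr'] at hcc hd ⊢
  rw [← hcr] at hc
  set r := rG y
  set r' := rG y'
  have hr := one_le_of_cosh hr0 hc
  have hrp : 0 < r := by linarith
  have hsh := cosh_le_two_sinh hrp.le hc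
  have hsp := Real.sinh_pos_iff.2 hrp
  have hrr : r ≤ r' := by
    have := Real.cosh_le_cosh.1 hcc
    rwa [abs_of_nonneg hr0, abs_of_nonneg hr0'] at this
  have hsh' := cosh_le_two_sinh hr0' (hc.trans hcc)
  have h1 := cosh_sub_ge hrr
  have hcp := Real.cosh_pos r
  have hd0 : 0 ≤ Real.cosh r' - Real.cosh r := sub_nonneg.2 hcc
  have hdr : r' - r ≤ 2 * (Real.cosh r' - Real.cosh r) / Real.cosh r := by
    rw [le_div_iff₀ hcp]
    nlinarith [sub_nonneg.2 hrr]
  have hdr1 : r' - r ≤ 1 := by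
    refine hdr.trans ?_
    rw [div_le_one hcp]; linarith
  have h2 := F_diff ht hr hrr (by linarith) hsh'
  have hF : 0 ≤ psi r * tE t r - psi r' * tE t r' := by
    have := mul_le_mul (psi_anti hr0 hrr) (tE_anti ht hr0 hrr) (tE_pos ht).le (psi_pos hr0).le
    linarith
  have hi : 0 ≤ (y.2.2)⁻¹ := by positivity
  rw [abs_sub_comm, ← mul_sub, abs_of_nonneg (mul_nonneg (mul_nonneg kap_pos.le hi) hF)]
  calc kap * (y.2.2)⁻¹ * (psi r * tE t r - psi r' * tE t r')
      ≤ 1 * (y.2.2)⁻¹ * (332 * (2 * (Real.cosh r' - Real.cosh r) / Real.cosh r) /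
          (r ^ 2 * (Real.cosh r / 2))) := by
        have hh : psi r * tE t r - psi r' * tE t r' ≤ 332 * (2 * (Real.cosh r' - Real.cosh r) / Real.cosh r) /
          (r ^ 2 * (Real.cosh r / 2)) := by
          refine h2.trans ?_
          gcongr
          linarith
        gcongr
        exact kap_le
    _ = 1328 * ((y.2.2)⁻¹ * (Real.cosh r' - Real.cosh r) / (r ^ 2 * Real.cosh r ^ 2)) := by
        field_simp; ring
    _ ≤ 1400 * ((y.2.2)⁻¹ * (Real.cosh r' - Real.cosh r) / (r ^ 2 * Real.cosh r ^ 2)) := by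
        gcongr; norm_num
    _ = _ := by ring

lemma heatK_strict {t : ℝ} (ht : 0 < t) {y y' : G} (hs : 0 < y.2.2) (he : y'.2.2 = y.2.2)
    (hcc : coshArg y < coshArg y') : heatK t y' < heatK t y := by
  have hs' : 0 < y'.2.2 := by rw [he]; exact hs
  rw [heatK_eq hs, heatK_eq hs', he]
  have hr0 := rG_nonneg hs
  have h1 : rG y < rG y' := by
    rw [rG_eq, rG_eq]
    exact (Real.arcosh_lt_arcosh (by linarith [one_le_coshArg hs])
      (by linarith [one_le_coshArg hs'])).2 hcc
  have hi : 0 < kap * (y.2.2)⁻¹ := mul_pos kap_pos (by positivity)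
  apply mul_lt_mul_of_pos_left _ hi
  calc psi (rG y') * tE t (rG y') ≤ psi (rG y) * tE t (rG y') := by
        have := (tE_pos (r := rG y') ht).le
        gcongr
        exact psi_anti hr0 h1.le
    _ < _ := mul_lt_mul_of_pos_left (tE_strict ht hr0 h1) (psi_pos hr0)

/-- local Gaussian bound on the heat kernel -/
lemma heatK_local {t : ℝ} (ht : 0 < t) {y : G} (hs : 0 < y.2.2) {K : ℝ}
    (hK : 1 + y.2.2 ^ 2 + y.1 ^ 2 + y.2.1 ^ 2 ≤ K) :
    heatK t y ≤ (y.2.2)⁻¹ * (t ^ (-(3 : ℝ)/2) *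
      Real.exp (-(2 / K * ((y.2.2 - 1) ^ 2 + y.1 ^ 2 + y.2.1 ^ 2)) / (4 * t))) := by
  rw [heatK_eq hs]
  have hr0 := rG_nonneg hs
  have hcr := cosh_rG hs
  set r := rG y with hrdef
  have h1 : Real.cosh r - 1 ≤ r ^ 2 / 2 * Real.cosh r := by
    have e1 : Real.cosh r = 2 * Real.sinh (r/2) ^ 2 + 1 := by
      have := Real.cosh_two_mul (r/2)
      rw [show 2 * (r/2) = r by ring] at this
      rw [this, Real.cosh_sq]; ring
    have e2 : Real.cosh r = 2 * Real.cosh (r/2) ^ 2 - 1 := by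
      rw [e1, Real.cosh_sq]; ring
    have e3 : Real.sinh (r/2) ≤ (r/2) * Real.cosh (r/2) := by
      have := sinh_sub_le (r := 0) (r' := r/2) le_rfl (by positivity)
      simpa using this
    have e4 : 0 ≤ Real.sinh (r/2) := Real.sinh_nonneg_iff.2 (by positivity)
    have e5 : Real.sinh (r/2) ^ 2 ≤ ((r/2) * Real.cosh (r/2)) ^ 2 := by gcongr
    have e6 : Real.cosh (r/2) ^ 2 = (Real.cosh r + 1)/2 := by linarith
    have e7 := Real.one_le_cosh r
    rw [mul_pow, e6] at e5
    nlinarith [sq_nonneg r]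
  set q := (y.2.2 - 1) ^ 2 + y.1 ^ 2 + y.2.1 ^ 2 with hq
  have hq0 : 0 ≤ q := by positivity
  set P := 1 + y.2.2 ^ 2 + y.1 ^ 2 + y.2.1 ^ 2 with hP
  have hP0 : 0 < P := by positivity
  have h2 : Real.cosh r = P / (2 * y.2.2) := by rw [hcr, coshArg_eq hs]
  have h3 : 2 * q ≤ r ^ 2 * P := by
    rw [h2] at h1
    have e : P / (2 * y.2.2) - 1 = q / (2 * y.2.2) := by
      rw [hP, hq]; field_simp; ring
    rw [e, mul_div_assoc', div_le_div_iff_of_pos_right (by positivity)] at h1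
    linarith
  have h4 : 2 / K * q ≤ r ^ 2 := by
    rw [div_mul_eq_mul_div, div_le_iff₀ (by linarith)]
    nlinarith [sq_nonneg r]
  have hi : 0 < (y.2.2)⁻¹ := by positivity
  have h5 : tE t r ≤ t ^ (-(3 : ℝ)/2) * Real.exp (-(2 / K * q) / (4 * t)) := by
    unfold tE; gcongr
  calc kap * (y.2.2)⁻¹ * (psi r * tE t r) ≤ 1 * (y.2.2)⁻¹ * (1 * tE t r) := by
        have := (tE_pos (r := r) ht).le
        have := (psi_pos hr0)
        gcongr
        · exact kap_le
        · exact psi_le_one hr0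
    _ ≤ _ := by
        rw [one_mul, one_mul]; gcongr

def wG (s : ℝ) : ℝ≥0∞ := ENNReal.ofReal (if 0 < s then s⁻¹ else 0)

lemma measurable_wG : Measurable wG := by
  unfold wG
  exact (Measurable.ite measurableSet_Ioi measurable_inv measurable_const).ennreal_ofReal

def nuG : Measure ℝ := (volume : Measure ℝ).withDensity wG

instance : SFinite nuG := by unfold nuG; infer_instance

lemma rhoG_eq : ρG = (volume : Measure ℝ).prod ((volume : Measure ℝ).prod nuG) := by
  unfold nuG
  rw [prod_withDensity_right measurable_wG,
    prod_withDensity_right (show Measurable (fun z : ℝ × ℝ => wG z.2) from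
      measurable_wG.comp measurable_snd)]
  rfl

instance : SFinite ρG := by rw [rhoG_eq]; infer_instance

lemma nuG_ae_pos : ∀ᵐ s ∂nuG, 0 < s := by
  unfold nuG
  rw [ae_withDensity_iff measurable_wG]
  filter_upwards with s hs
  by_contra h
  simp [wG, h] at hs

lemma rhoG_ae_pos : ∀ᵐ x ∂ρG, 0 < x.2.2 := by
  rw [rhoG_eq]
  have h1 : ∀ᵐ p ∂((volume : Measure ℝ).prod nuG), 0 < p.2 :=
    Measure.quasiMeasurePreserving_snd.ae nuG_ae_pos
  exact Measure.quasiMeasurePreserving_snd.ae h1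

lemma nuG_Icc_le {c d : ℝ} (hc : 0 < c) : nuG (Icc c d) ≤ ENNReal.ofReal (c⁻¹ * (d - c)) := by
  unfold nuG
  rw [withDensity_apply _ measurableSet_Icc]
  calc ∫⁻ s in Icc c d, wG s ≤ ∫⁻ s in Icc c d, ENNReal.ofReal c⁻¹ := by
        apply setLIntegral_mono measurable_const
        intro s hs
        have : 0 < s := hc.trans_le hs.1
        unfold wG
        rw [if_pos this]
        apply ENNReal.ofReal_le_ofReal
        gcongr
        exact hs.1
    _ = _ := by
        rw [setLIntegral_const, Real.volume_Icc, ← ENNReal.ofReal_mul (by positivity)]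

lemma nuG_Icc_pos {c d : ℝ} (hc : 0 < c) (hd : c < d) : 0 < nuG (Icc c d) := by
  unfold nuG
  rw [withDensity_apply _ measurableSet_Icc]
  have h : ENNReal.ofReal (d⁻¹ * (d - c)) ≤ ∫⁻ s in Icc c d, wG s := by
    calc _ = ∫⁻ s in Icc c d, ENNReal.ofReal d⁻¹ := by
          rw [setLIntegral_const, Real.volume_Icc, ← ENNReal.ofReal_mul (by
            have := hc.trans hd; positivity)]
      _ ≤ _ := by
        apply setLIntegral_mono measurable_wG
        intro s hs
        have : 0 < s := hc.trans_le hs.1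
        unfold wG
        rw [if_pos this]
        apply ENNReal.ofReal_le_ofReal
        gcongr
        exact hs.2
  refine lt_of_lt_of_le ?_ h
  rw [ENNReal.ofReal_pos]
  have := hc.trans hd
  have := sub_pos.2 hd
  positivity

lemma nuG_Icc_lt_top {c d : ℝ} (hc : 0 < c) : nuG (Icc c d) < ⊤ :=
  (nuG_Icc_le hc).trans_lt ENNReal.ofReal_lt_top

lemma rhoG_prod (I J S : Set ℝ) :
    ρG (I ×ˢ (J ×ˢ S)) = volume I * (volume J * nuG S) := by
  rw [rhoG_eq, Measure.prod_prod, Measure.prod_prod]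

def U (a : ℝ) : ℝ := 1 + |Real.log a|

lemma nuG_int_finite :
    ∫⁻ s, ENNReal.ofReal (1 / (U s * Real.sqrt (U s))) ∂nuG < ⊤ := by
  have hmeas : Measurable (fun s => ENNReal.ofReal (1 / (U s * Real.sqrt (U s)))) := by
    unfold U; fun_prop
  unfold nuG
  rw [lintegral_withDensity_eq_lintegral_mul _ measurable_wG hmeas]
  have h0 : ∫⁻ s, (wG * fun s => ENNReal.ofReal (1 / (U s * Real.sqrt (U s)))) s
      = ∫⁻ s in Ioi 0, (wG * fun s => ENNReal.ofReal (1 / (U s * Real.sqrt (U s)))) s := by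
    rw [← lintegral_indicator measurableSet_Ioi]
    congr 1
    ext s
    by_cases hs : 0 < s
    · rw [indicator_of_mem (by exact hs)]
    · rw [indicator_of_notMem (by exact hs)]
      simp [wG, hs]
  rw [h0]
  have himg : Real.exp '' univ = Ioi 0 := by rw [image_univ, Real.range_exp]
  rw [← himg, lintegral_image_eq_lintegral_abs_deriv_mul MeasurableSet.univ
    (fun x _ => (Real.hasDerivAt_exp x).hasDerivWithinAt) Real.exp_injective.injOn]
  rw [Measure.restrict_univ]
  have hI := integrable_one_add_norm (E := ℝ) (μ := volume) (r := 3/2) (by norm_num)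
  refine lt_of_le_of_lt ?_ hI.lintegral_lt_top
  apply lintegral_mono
  intro u
  simp only [Pi.mul_apply, wG, Real.exp_pos, if_true, U, Real.log_exp]
  rw [← mul_assoc, ← ENNReal.ofReal_mul (abs_nonneg _), abs_of_pos (Real.exp_pos u),
    mul_inv_cancel₀ (Real.exp_pos u).ne', ENNReal.ofReal_one, one_mul]
  apply ENNReal.ofReal_le_ofReal
  rw [Real.norm_eq_abs, Real.rpow_neg (by positivity), one_div]
  apply le_of_eq
  congr 1
  rw [show (3/2 : ℝ) = 1 + 1/2 by norm_num, Real.rpow_add (by positivity), Real.rpow_one,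
    Real.sqrt_eq_rpow]

/-- shear -/
lemma shear_mp (c : ℝ) :
    MeasurePreserving (fun y : G => ((y.1 - y.2.2 * c, y.2.1, y.2.2) : G)) ρG ρG := by
  rw [rhoG_eq]
  set m := (volume : Measure ℝ).prod nuG
  have h1 : MeasurePreserving (fun p : (ℝ × ℝ) × ℝ => (p.1, p.2 - p.1.2 * c))
      (m.prod volume) (m.prod volume) := by
    refine MeasurePreserving.skew_product (f := id) (g := fun p y => y - p.2 * c)
      (MeasurePreserving.id m) (by unfold Function.uncurry; fun_prop) ?_
    filter_upwards with p
    exact (measurePreserving_sub_right volume (p.2 * c)).map_eq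
  exact (Measure.measurePreserving_swap.comp h1).comp Measure.measurePreserving_swap

lemma trans_mp (c : ℝ) :
    MeasurePreserving (fun y : G => ((y.1 - c, y.2.1, y.2.2) : G)) ρG ρG := by
  rw [rhoG_eq]
  exact (measurePreserving_sub_right volume c).prod (MeasurePreserving.id _)

lemma measurable_coshArg : Measurable coshArg := by unfold coshArg; fun_prop

lemma measurable_rG : Measurable rG := by
  unfold rG
  have := measurable_coshArg
  fun_prop

lemma measurable_heatK (t : ℝ) : Measurable (heatK t) := by
  unfold heatK deltaG
  have := measurable_rG
  have h2 : Measurable (fun y => if rG y = 0 then 1 else rG y / Real.sinh (rG y)) :=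
    Measurable.ite (measurable_rG (measurableSet_singleton 0)) measurable_const (by fun_prop)
  fun_prop

lemma measurableSet_R0 : MeasurableSet R0set :=
  measurableSet_Icc.prod (measurableSet_Icc.prod measurableSet_Icc)

lemma measurableSet_RL (L : ℝ) : MeasurableSet (RLset L) :=
  measurableSet_Icc.prod (measurableSet_Icc.prod measurableSet_Icc)

lemma measurable_gg : Measurable (fun p : G × G => gMul p.1 (gInv p.2)) := by
  unfold gMul gInv; fun_prop

lemma measurable_gx (x : G) : Measurable (fun y : G => gMul x (gInv y)) := by
  unfold gMul gInv; fun_prop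

lemma shear2_mp (c : ℝ) :
    MeasurePreserving (fun y : G => ((y.1, y.2.1 - y.2.2 * c, y.2.2) : G)) ρG ρG := by
  rw [rhoG_eq]
  have h1 : MeasurePreserving (fun p : ℝ × ℝ => (p.1, p.2 - p.1 * c))
      (nuG.prod volume) (nuG.prod volume) := by
    refine MeasurePreserving.skew_product (f := id) (g := fun p y => y - p * c)
      (MeasurePreserving.id nuG) (by unfold Function.uncurry; fun_prop) ?_
    filter_upwards with p
    exact (measurePreserving_sub_right volume (p * c)).map_eq
  have h2 := (Measure.measurePreserving_swap.comp h1).comp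
    (Measure.measurePreserving_swap (μ := (volume : Measure ℝ)) (ν := nuG))
  exact (MeasurePreserving.id (volume : Measure ℝ)).prod h2

def SX (x : G) : Set G := {y | gMul x (gInv y) ∈ R0set}

lemma measurableSet_SX (x : G) : MeasurableSet (SX x) := measurable_gx x measurableSet_R0

def DG (x : G) : ℝ := 1 + x.2.2 ^ 2 + x.1 ^ 2 + x.2.1 ^ 2

lemma DG_pos (x : G) : 0 < DG x := by unfold DG; positivity

lemma exp_neg_one_ge : (1/3 : ℝ) ≤ Real.exp (-1) := by
  rw [Real.exp_neg, one_div]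
  have := Real.exp_one_lt_d9
  gcongr; linarith

lemma exp_one_le : Real.exp 1 ≤ 3 := by have := Real.exp_one_lt_d9; linarith

lemma SX_mem {x y : G} (ha : 0 < x.2.2) (hy : y ∈ SX x) :
    ∃ b z1 z2 : ℝ, 1/3 ≤ b ∧ b ≤ 3 ∧ |z1| ≤ 1 ∧ |z2| ≤ 1 ∧
      y = ((x.1 - z1) / b, (x.2.1 - z2) / b, x.2.2 / b) := by
  obtain ⟨x1, x2, a⟩ := x
  obtain ⟨y1, y2, s⟩ := y
  simp only [SX, gMul, gInv, R0set, mem_ofPred_eq, mem_prod, mem_Icc] at hy ha ⊢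
  obtain ⟨⟨h1, h2⟩, ⟨h3, h4⟩, h5, h6⟩ := hy
  have hs : 0 < s := by
    by_contra hs
    push Not at hs
    have : a * (1 / s) ≤ 0 := mul_nonpos_of_nonneg_of_nonpos ha.le (by
      apply div_nonpos_of_nonneg_of_nonpos zero_le_one hs)
    linarith [Real.exp_pos (-1)]
  refine ⟨a * (1/s), x1 + a * (-y1 / s), x2 + a * (-y2 / s), ?_, ?_, abs_le.2 ⟨h1, h2⟩,
    abs_le.2 ⟨h3, h4⟩, ?_⟩
  · exact exp_neg_one_ge.trans h5
  · exact h6.trans exp_one_le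
  · ext
    · simp; field_simp
    · simp; field_simp
    · simp; field_simp

lemma rho_SX_le {x : G} (ha : 0 < x.2.2) : ρG (SX x) ≤ ENNReal.ofReal 288 := by
  have hmp := (shear2_mp (x.2.1 / x.2.2)).comp (shear_mp (x.1 / x.2.2))
  have hsub : SX x ⊆ ((fun y : G => ((y.1, y.2.1 - y.2.2 * (x.2.1 / x.2.2), y.2.2) : G)) ∘
      (fun y : G => ((y.1 - y.2.2 * (x.1 / x.2.2), y.2.1, y.2.2) : G))) ⁻¹'
      (Icc (-3) 3 ×ˢ (Icc (-3) 3 ×ˢ Icc (x.2.2 / 3) (3 * x.2.2))) := by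
    intro y hy
    obtain ⟨b, z1, z2, hb1, hb2, hz1, hz2, rfl⟩ := SX_mem ha hy
    have hb0 : 0 < b := by linarith
    rw [abs_le] at hz1 hz2
    have e1 : (x.1 - z1) / b - x.2.2 / b * (x.1 / x.2.2) = -z1 / b := by field_simp; ring
    have e2 : (x.2.1 - z2) / b - x.2.2 / b * (x.2.1 / x.2.2) = -z2 / b := by field_simp; ring
    simp only [mem_preimage, Function.comp_apply, mem_prod, mem_Icc, e1, e2]
    refine ⟨⟨?_, ?_⟩, ⟨?_, ?_⟩, ?_, ?_⟩
    · rw [le_div_iff₀ hb0]; linarith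
    · rw [div_le_iff₀ hb0]; linarith
    · rw [le_div_iff₀ hb0]; linarith
    · rw [div_le_iff₀ hb0]; linarith
    · gcongr
    · rw [div_le_iff₀ hb0]; nlinarith
  have hm : MeasurableSet (Icc (-3 : ℝ) 3 ×ˢ (Icc (-3 : ℝ) 3 ×ˢ Icc (x.2.2 / 3) (3 * x.2.2))) :=
    measurableSet_Icc.prod (measurableSet_Icc.prod measurableSet_Icc)
  refine (measure_mono hsub).trans ?_
  rw [hmp.measure_preimage hm.nullMeasurableSet, rhoG_prod, Real.volume_Icc]
  have h3 : nuG (Icc (x.2.2 / 3) (3 * x.2.2)) ≤ ENNReal.ofReal 8 := by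
    refine (nuG_Icc_le (by positivity)).trans (le_of_eq ?_)
    congr 1
    field_simp; norm_num
  calc _ ≤ ENNReal.ofReal (3 - -3) * (ENNReal.ofReal (3 - -3) * ENNReal.ofReal 8) := by gcongr
    _ = _ := by rw [← ENNReal.ofReal_mul (by norm_num), ← ENNReal.ofReal_mul (by norm_num)]; norm_num

lemma coshArg_SX {x : G} (ha : 0 < x.2.2) {b z1 z2 : ℝ} (hb : 0 < b) :
    coshArg ((x.1 - z1) / b, (x.2.1 - z2) / b, x.2.2 / b)
      = (x.2.2 ^ 2 + b ^ 2 + (x.1 - z1) ^ 2 + (x.2.1 - z2) ^ 2) / (2 * x.2.2 * b) := by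
  unfold coshArg
  simp only
  field_simp
  ring

lemma coshArg_SX_ge {x : G} (ha : 0 < x.2.2) {b z1 z2 : ℝ} (hb : 1/3 ≤ b) (hb2 : b ≤ 3)
    (hz1 : |z1| ≤ 1) (hz2 : |z2| ≤ 1) :
    DG x / x.2.2 / 270 ≤ coshArg ((x.1 - z1) / b, (x.2.1 - z2) / b, x.2.2 / b) := by
  have hb0 : 0 < b := by linarith
  rw [coshArg_SX ha hb0]
  have h1 : z1 ^ 2 ≤ 1 := by rw [← sq_abs]; exact pow_le_one₀ (abs_nonneg _) hz1
  have h2 : z2 ^ 2 ≤ 1 := by rw [← sq_abs]; exact pow_le_one₀ (abs_nonneg _) hz2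
  have h3 : DG x ≤ 45 * (x.2.2 ^ 2 + b ^ 2 + (x.1 - z1) ^ 2 + (x.2.1 - z2) ^ 2) := by
    unfold DG
    nlinarith [sq_nonneg (x.1 - 2 * z1), sq_nonneg (x.2.1 - 2 * z2), sq_nonneg (x.1 - z1),
      sq_nonneg (x.2.1 - z2), sq_nonneg x.2.2]
  have hD := DG_pos x
  rw [div_div, div_le_div_iff₀ (by positivity) (by positivity)]
  calc DG x * (2 * x.2.2 * b) ≤ DG x * (2 * x.2.2 * 3) := by gcongr
    _ ≤ (45 * (x.2.2 ^ 2 + b ^ 2 + (x.1 - z1) ^ 2 + (x.2.1 - z2) ^ 2)) * (2 * x.2.2 * 3) := by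
        gcongr
    _ = _ := by ring

lemma DGa_ge_a {x : G} (ha : 0 < x.2.2) : x.2.2 ≤ DG x / x.2.2 := by
  rw [le_div_iff₀ ha]; unfold DG; nlinarith [sq_nonneg x.1, sq_nonneg x.2.1]

lemma DGa_ge_inv {x : G} (ha : 0 < x.2.2) : (x.2.2)⁻¹ ≤ DG x / x.2.2 := by
  rw [div_eq_mul_inv]
  have h1 : 1 ≤ DG x := by unfold DG; nlinarith [sq_nonneg x.1, sq_nonneg x.2.1, sq_nonneg x.2.2]
  have : 0 < (x.2.2)⁻¹ := by positivity
  nlinarith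

lemma DGa_ge_x {x : G} (ha : 0 < x.2.2) : |x.1| ≤ DG x / x.2.2 := by
  rw [le_div_iff₀ ha]; unfold DG
  nlinarith [sq_nonneg (|x.1| - x.2.2), sq_nonneg x.2.1, sq_abs x.1, sq_nonneg x.2.2]

lemma DG_le_sq {x : G} (ha : 0 < x.2.2) : DG x ≤ (DG x / x.2.2) ^ 2 := by
  rw [div_pow, le_div_iff₀ (by positivity)]
  have : x.2.2 ^ 2 ≤ DG x := by unfold DG; nlinarith [sq_nonneg x.1, sq_nonneg x.2.1]
  nlinarith [DG_pos x]

lemma log_abs_le {x : G} (ha : 0 < x.2.2) : |Real.log x.2.2| ≤ Real.log (DG x / x.2.2) := by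
  have := DG_pos x
  rw [abs_le]
  constructor
  · rw [neg_le, ← Real.log_inv]
    exact Real.log_le_log (by positivity) (DGa_ge_inv ha)
  · exact Real.log_le_log ha (DGa_ge_a ha)

def V (s : ℝ) : ℝ := 1 + Real.log (1 + |s|)

lemma V_ge (s : ℝ) : 1 ≤ V s := by
  unfold V; have := Real.log_nonneg (x := 1 + |s|) (by linarith [abs_nonneg s]); linarith

lemma U_ge (s : ℝ) : 1 ≤ U s := by unfold U; linarith [abs_nonneg (Real.log s)]

def WG (x : G) : ℝ := U x.2.2 * Real.sqrt (U x.2.2) * Real.sqrt (V x.1)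

lemma WG_pos (x : G) : 0 < WG x := by
  unfold WG; have := U_ge x.2.2; have := V_ge x.1; positivity

lemma log_big {Q : ℝ} (hQ : 10 ^ 6 ≤ Q) : 1 ≤ Real.log Q := by
  rw [Real.le_log_iff_exp_le (by linarith)]
  linarith [exp_one_le]

lemma WG_le {x : G} (ha : 0 < x.2.2) (hQ : 10 ^ 6 ≤ DG x / x.2.2) :
    WG x ≤ (3 * Real.log (DG x / x.2.2)) ^ 2 := by
  have hlog := log_big hQ
  set Q := DG x / x.2.2 with hQd
  have h1 : U x.2.2 ≤ 3 * Real.log Q := by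
    unfold U; have := log_abs_le ha; linarith
  have h2 : V x.1 ≤ 3 * Real.log Q := by
    unfold V
    have h3 : Real.log (1 + |x.1|) ≤ Real.log (Q ^ 2) := by
      apply Real.log_le_log (by positivity)
      have := DGa_ge_x ha
      nlinarith
    rw [Real.log_pow] at h3
    push_cast at h3
    linarith
  unfold WG
  have u0 := U_ge x.2.2
  have v0 := V_ge x.1
  set w := 3 * Real.log Q
  have hw : 0 ≤ w := by positivity
  calc U x.2.2 * Real.sqrt (U x.2.2) * Real.sqrt (V x.1) ≤ w * Real.sqrt w * Real.sqrt w := by gcongr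
    _ = w ^ 2 := by rw [mul_assoc, Real.mul_self_sqrt hw]; ring

lemma rG_ge {y : G} (hs : 0 < y.2.2) {Q c : ℝ} (hQ : 10 ^ 6 ≤ Q) (hc : 0 < c) (hc2 : c ≤ 1000)
    (h : Q / c ≤ coshArg y) : Real.log Q / 2 ≤ rG y := by
  have h1 := log_cosh_le (rG_nonneg hs)
  rw [cosh_rG hs] at h1
  refine le_trans ?_ h1
  have hQ0 : 0 < Q := by linarith
  have h2 : Real.log (Q / c) ≤ Real.log (coshArg y) := Real.log_le_log (by positivity) h
  refine le_trans ?_ h2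
  rw [Real.log_div hQ0.ne' hc.ne']
  have h3 : Real.log (c ^ 2) ≤ Real.log Q := by
    apply Real.log_le_log (by positivity)
    nlinarith
  rw [Real.log_pow] at h3
  push_cast at h3
  linarith

lemma heatK_nonlocal {t : ℝ} (ht : 0 < t) {x y : G} (ha : 0 < x.2.2)
    (hQ : 10 ^ 6 ≤ DG x / x.2.2) (hy : y ∈ SX x) :
    heatK t y ≤ 10 ^ 6 / (DG x * WG x) := by
  have hW := WG_le ha hQ
  have hW0 := WG_pos x
  obtain ⟨b, z1, z2, hb1, hb2, hz1, hz2, rfl⟩ := SX_mem ha hy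
  have hb0 : 0 < b := by linarith
  have hc := coshArg_SX_ge ha hb1 hb2 hz1 hz2
  set y : G := ((x.1 - z1) / b, (x.2.1 - z2) / b, x.2.2 / b) with hyd
  have hs : 0 < y.2.2 := by simp only [hyd]; positivity
  have hr := rG_ge hs hQ (by norm_num) (by norm_num) hc
  have hlog := log_big hQ
  have hD := DG_pos x
  refine (heatK_le ht hs (by linarith)).trans ?_
  have hsi : (y.2.2)⁻¹ ≤ 3 / x.2.2 := by
    simp only [hyd]; rw [inv_div]; gcongr
  have hlogp : 0 < Real.log (DG x / x.2.2) := by linarith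
  calc 32 * (y.2.2)⁻¹ / (rG y ^ 2 * coshArg y)
      ≤ 32 * (3 / x.2.2) / ((Real.log (DG x / x.2.2) / 2) ^ 2 * (DG x / x.2.2 / 270)) := by
        gcongr
    _ = 103680 * 9 / (DG x * (3 * Real.log (DG x / x.2.2)) ^ 2) := by field_simp; norm_num
    _ ≤ 10 ^ 6 / (DG x * WG x) := by
        gcongr
        norm_num

lemma I0_nonlocal {t : ℝ} (ht : 0 < t) {x : G} (ha : 0 < x.2.2)
    (hQ : 10 ^ 6 ≤ DG x / x.2.2) :
    ∫⁻ y in SX x, ENNReal.ofReal (heatK t y) ∂ρG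
      ≤ ENNReal.ofReal (288 * 10 ^ 6 / (DG x * WG x)) := by
  have := DG_pos x
  have := WG_pos x
  calc ∫⁻ y in SX x, ENNReal.ofReal (heatK t y) ∂ρG
      ≤ ∫⁻ y in SX x, ENNReal.ofReal (10 ^ 6 / (DG x * WG x)) ∂ρG := by
        apply setLIntegral_mono measurable_const
        intro y hy
        exact ENNReal.ofReal_le_ofReal (heatK_nonlocal ht ha hQ hy)
    _ = ENNReal.ofReal (10 ^ 6 / (DG x * WG x)) * ρG (SX x) := setLIntegral_const _ _
    _ ≤ ENNReal.ofReal (10 ^ 6 / (DG x * WG x)) * ENNReal.ofReal 288 := by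
        gcongr; exact rho_SX_le ha
    _ = _ := by
        rw [← ENNReal.ofReal_mul (by positivity)]
        congr 1; ring

lemma gauss_lint {c : ℝ} (hc : 0 < c) :
    ∫⁻ v : ℝ, ENNReal.ofReal (Real.exp (-c * v ^ 2)) = ENNReal.ofReal (Real.sqrt (Real.pi / c)) := by
  rw [← integral_gaussian, ofReal_integral_eq_lintegral_ofReal (integrable_exp_neg_mul_sq hc)]
  filter_upwards with v using (Real.exp_pos _).le

lemma I0_local : ∃ C : ℝ, 0 < C ∧ ∀ t : ℝ, 0 < t → ∀ x : G, 0 < x.2.2 → DG x / x.2.2 < 10 ^ 6 →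
    ∫⁻ y in SX x, ENNReal.ofReal (heatK t y) ∂ρG ≤ ENNReal.ofReal C := by
  set K : ℝ := 200 * (10 ^ 6) ^ 2 with hK
  refine ⟨(3 * 10 ^ 6) ^ 2 * Real.sqrt (Real.pi * (2 * K)) ^ 3, by positivity, ?_⟩
  intro t ht x ha hQ
  set c : ℝ := 1 / (2 * K * t) with hc
  have hc0 : 0 < c := by positivity
  have hainv : (x.2.2)⁻¹ ≤ 10 ^ 6 := (DGa_ge_inv ha).trans hQ.le
  have hD : DG x ≤ (10 ^ 6) ^ 2 := by
    have h0 : 0 < DG x / x.2.2 := div_pos (DG_pos x) ha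
    exact (DG_le_sq ha).trans (by gcongr)
  have key : ∀ y ∈ SX x, 0 < y.2.2 ∧ (y.2.2)⁻¹ ≤ 3 * 10 ^ 6 ∧ ENNReal.ofReal (heatK t y) ≤
      ENNReal.ofReal (3 * 10 ^ 6 * t ^ (-(3 : ℝ)/2)) *
      (ENNReal.ofReal (Real.exp (-c * y.1 ^ 2)) * (ENNReal.ofReal (Real.exp (-c * y.2.1 ^ 2)) *
        ENNReal.ofReal (Real.exp (-c * (y.2.2 - 1) ^ 2)))) := by
    intro y hy
    obtain ⟨b, z1, z2, hb1, hb2, hz1, hz2, hyd⟩ := SX_mem ha hy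
    have hb0 : 0 < b := by linarith
    have hs : 0 < y.2.2 := by simp only [hyd]; positivity
    have hsi : (y.2.2)⁻¹ ≤ 3 * 10 ^ 6 := by
      simp only [hyd]; rw [inv_div, div_eq_mul_inv]; gcongr
    refine ⟨hs, hsi, ?_⟩
    have hP : 1 + y.2.2 ^ 2 + y.1 ^ 2 + y.2.1 ^ 2 ≤ K := by
      have h1 : z1 ^ 2 ≤ 1 := by rw [← sq_abs]; exact pow_le_one₀ (abs_nonneg _) hz1
      have h2 : z2 ^ 2 ≤ 1 := by rw [← sq_abs]; exact pow_le_one₀ (abs_nonneg _) hz2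
      have e : 1 + y.2.2 ^ 2 + y.1 ^ 2 + y.2.1 ^ 2
          = (b ^ 2 + x.2.2 ^ 2 + (x.1 - z1) ^ 2 + (x.2.1 - z2) ^ 2) / b ^ 2 := by
        simp only [hyd]; field_simp
      rw [e, div_le_iff₀ (by positivity)]
      have h3 : b ^ 2 + x.2.2 ^ 2 + (x.1 - z1) ^ 2 + (x.2.1 - z2) ^ 2 ≤ 13 * DG x := by
        unfold DG
        nlinarith [sq_nonneg (x.1 + z1), sq_nonneg (x.2.1 + z2), sq_nonneg x.1, sq_nonneg x.2.1,
          sq_nonneg x.2.2]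
      have h4 : (1/9 : ℝ) ≤ b ^ 2 := by nlinarith
      have hK0 : 0 < K := by positivity
      nlinarith
    have h5 := heatK_local ht hs hP
    rw [← ENNReal.ofReal_mul (by positivity), ← ENNReal.ofReal_mul (by positivity),
      ← ENNReal.ofReal_mul (by positivity)]
    apply ENNReal.ofReal_le_ofReal
    refine h5.trans ?_
    rw [← Real.exp_add, ← Real.exp_add, ← mul_assoc]
    have e : -(2 / K * ((y.2.2 - 1) ^ 2 + y.1 ^ 2 + y.2.1 ^ 2)) / (4 * t)
        = -c * y.1 ^ 2 + (-c * y.2.1 ^ 2 + -c * (y.2.2 - 1) ^ 2) := by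
      rw [hc]; have : K ≠ 0 := by positivity
      field_simp; ring
    rw [e]
    gcongr
  set g : ℝ → ℝ≥0∞ := fun v => ENNReal.ofReal (Real.exp (-c * v ^ 2)) with hg
  have hgm : Measurable g := by rw [hg]; fun_prop
  set F : G → ℝ≥0∞ := fun y => g y.1 * (g y.2.1 * g (y.2.2 - 1)) with hF
  have hFm : Measurable F := by rw [hF]; fun_prop
  set A := ENNReal.ofReal (3 * 10 ^ 6 * t ^ (-(3 : ℝ)/2)) with hA
  have hgi : ∫⁻ v, g v = ENNReal.ofReal (Real.sqrt (Real.pi / c)) := gauss_lint hc0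
  have hFi : ∫⁻ y, F y = ENNReal.ofReal (Real.sqrt (Real.pi / c) ^ 3) := by
    have h1 : ∫⁻ y : G, F y = (∫⁻ v, g v) * ∫⁻ p : ℝ × ℝ, g p.1 * g (p.2 - 1) :=
      lintegral_prod_mul (μ := (volume : Measure ℝ)) (ν := (volume : Measure (ℝ × ℝ)))
        (f := g) (g := fun p : ℝ × ℝ => g p.1 * g (p.2 - 1)) hgm.aemeasurable (by fun_prop)
    have h2 : ∫⁻ p : ℝ × ℝ, g p.1 * g (p.2 - 1) = (∫⁻ v, g v) * ∫⁻ v, g (v - 1) :=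
      lintegral_prod_mul (μ := (volume : Measure ℝ)) (ν := (volume : Measure ℝ))
        (f := g) (g := fun p : ℝ => g (p - 1)) hgm.aemeasurable (by fun_prop)
    have h3 : ∫⁻ v, g (v - 1) = ∫⁻ v, g v := lintegral_sub_right_eq_self g 1
    rw [h1, h2, h3, hgi, ← ENNReal.ofReal_mul (by positivity), ← ENNReal.ofReal_mul (by positivity)]
    congr 1; ring
  have hdens : Measurable (fun x : G => ENNReal.ofReal (if 0 < x.2.2 then x.2.2⁻¹ else 0)) :=
    measurable_wG.comp (measurable_snd.comp measurable_snd)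
  calc ∫⁻ y in SX x, ENNReal.ofReal (heatK t y) ∂ρG
      ≤ ∫⁻ y in SX x, A * F y ∂ρG := by
        apply setLIntegral_mono (by fun_prop)
        intro y hy; exact (key y hy).2.2
    _ = ∫⁻ y in SX x, ((fun x : G => ENNReal.ofReal (if 0 < x.2.2 then x.2.2⁻¹ else 0)) *
          fun y => A * F y) y := by
        unfold ρG
        rw [setLIntegral_withDensity_eq_setLIntegral_mul _ hdens (by fun_prop)
          (measurableSet_SX x)]
    _ ≤ ∫⁻ y in SX x, ENNReal.ofReal (3 * 10 ^ 6) * (A * F y) := by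
        apply setLIntegral_mono (by fun_prop)
        intro y hy
        obtain ⟨h1, h2, -⟩ := key y hy
        simp only [Pi.mul_apply, h1, if_true]
        gcongr
    _ ≤ ∫⁻ y, ENNReal.ofReal (3 * 10 ^ 6) * (A * F y) := setLIntegral_le_lintegral _ _
    _ = ENNReal.ofReal (3 * 10 ^ 6) * (A * ENNReal.ofReal (Real.sqrt (Real.pi / c) ^ 3)) := by
        rw [lintegral_const_mul _ (by fun_prop), lintegral_const_mul _ hFm, hFi]
    _ = _ := by
        rw [hA, ← ENNReal.ofReal_mul (by positivity), ← ENNReal.ofReal_mul (by positivity)]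
        congr 1
        have e : Real.pi / c = t * (Real.pi * (2 * K)) := by rw [hc]; field_simp
        rw [e, Real.sqrt_mul ht.le, rpow_t ht]
        have : 0 < Real.sqrt t := Real.sqrt_pos.2 ht
        field_simp

def EG (x : G) : ℝ := 1 + x.1 ^ 2 + x.2.1 ^ 2

lemma EG_pos (x : G) : 0 < EG x := by unfold EG; positivity
lemma EG_le (x : G) : EG x ≤ DG x := by unfold EG DG; nlinarith [sq_nonneg x.2.2]

lemma I0_bound : ∃ C : ℝ, 0 < C ∧ ∀ t : ℝ, 0 < t → ∀ x : G, 0 < x.2.2 →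
    ∫⁻ y in SX x, ENNReal.ofReal (heatK t y) ∂ρG ≤ ENNReal.ofReal (C / (EG x * WG x)) := by
  obtain ⟨C, hC, h⟩ := I0_local
  refine ⟨288 * 10 ^ 6 + C * ((10 ^ 6) ^ 2 * (1 + 10 ^ 6) ^ 3), by positivity, ?_⟩
  intro t ht x ha
  have hE := EG_pos x
  have hED := EG_le x
  have hW := WG_pos x
  rcases le_or_gt (10 ^ 6) (DG x / x.2.2) with hQ | hQ
  · refine (I0_nonlocal ht ha hQ).trans ?_
    apply ENNReal.ofReal_le_ofReal
    gcongr
    have : 0 < C * ((10 ^ 6) ^ 2 * (1 + 10 ^ 6) ^ 3) := by positivity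
    linarith
  · refine (h t ht x ha hQ).trans ?_
    apply ENNReal.ofReal_le_ofReal
    rw [le_div_iff₀ (by positivity)]
    have h0 : 0 < DG x / x.2.2 := div_pos (DG_pos x) ha
    have hD : DG x ≤ (10 ^ 6) ^ 2 := (DG_le_sq ha).trans (by gcongr)
    have hU : U x.2.2 ≤ 1 + 10 ^ 6 := by
      unfold U
      have := log_abs_le ha
      have h2 := Real.log_le_sub_one_of_pos h0
      linarith
    have hV : V x.1 ≤ 1 + 10 ^ 6 := by
      unfold V
      have := DGa_ge_x ha
      have h2 := Real.log_le_sub_one_of_pos (x := 1 + |x.1|) (by positivity)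
      linarith
    have u1 := U_ge x.2.2
    have v1 := V_ge x.1
    have su : Real.sqrt (U x.2.2) ≤ U x.2.2 := by
      rw [Real.sqrt_le_iff]; constructor <;> nlinarith
    have sv : Real.sqrt (V x.1) ≤ V x.1 := by
      rw [Real.sqrt_le_iff]; constructor <;> nlinarith
    have hWl : WG x ≤ (1 + 10 ^ 6) ^ 3 := by
      unfold WG
      calc U x.2.2 * Real.sqrt (U x.2.2) * Real.sqrt (V x.1) ≤ (1 + 10 ^ 6) * (1 + 10 ^ 6) * (1 + 10 ^ 6) := by
            gcongr
            · exact su.trans hU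
            · exact sv.trans hV
        _ = _ := by ring
    calc C * (EG x * WG x) ≤ C * ((10 ^ 6) ^ 2 * (1 + 10 ^ 6) ^ 3) := by
          gcongr
          exact hED.trans hD
      _ ≤ _ := by linarith

def trL (L : ℝ) (x : G) : G := (x.1 - L, x.2.1, x.2.2)

def shr (c : ℝ) (y : G) : G := (y.1 - y.2.2 * c, y.2.1, y.2.2)

lemma measurable_shr (c : ℝ) : Measurable (shr c) := by unfold shr; fun_prop

lemma shr_mem {x : G} (L : ℝ) (ha : 0 < x.2.2) (y : G) :
    shr (L / x.2.2) y ∈ SX (trL L x) ↔ y ∈ SX x := by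
  obtain ⟨x1, x2, a⟩ := x
  obtain ⟨y1, y2, s⟩ := y
  simp only at ha
  simp only [SX, shr, trL, gMul, gInv, R0set, mem_ofPred_eq, mem_prod, mem_Icc]
  by_cases hs : s = 0
  · subst hs
    have := Real.exp_pos (-1)
    constructor
    · rintro ⟨-, -, h, -⟩; simp at h; linarith
    · rintro ⟨-, -, h, -⟩; simp at h; linarith
  · have e : x1 - L + a * (-(y1 - s * (L / a)) / s) = x1 + a * (-y1 / s) := by
      field_simp; ring
    rw [e]

lemma RL_mem (L : ℝ) (x y : G) : gMul x (gInv y) ∈ RLset L ↔ y ∈ SX (trL L x) := by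
  simp only [SX, trL, gMul, gInv, R0set, RLset, mem_ofPred_eq, mem_prod, mem_Icc]
  constructor
  · rintro ⟨⟨h1, h2⟩, h3⟩; exact ⟨⟨by linarith, by linarith⟩, h3⟩
  · rintro ⟨⟨h1, h2⟩, h3⟩; exact ⟨⟨by linarith, by linarith⟩, h3⟩

lemma fL_mul_eq (L t : ℝ) (x : G) :
    (fun y => fL L (gMul x (gInv y)) * heatK t y) =
      fun y => (SX (trL L x)).indicator (heatK t) y - (SX x).indicator (heatK t) y := by
  ext y
  unfold fL
  rw [sub_mul]
  congr 1
  · by_cases h : y ∈ SX (trL L x)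
    · rw [indicator_of_mem h, indicator_of_mem ((RL_mem L x y).2 h), one_mul]
    · rw [indicator_of_notMem h, indicator_of_notMem (fun h' => h ((RL_mem L x y).1 h')), zero_mul]
  · by_cases h : y ∈ SX x
    · rw [indicator_of_mem h, indicator_of_mem (show gMul x (gInv y) ∈ R0set from h), one_mul]
    · rw [indicator_of_notMem h, indicator_of_notMem (show gMul x (gInv y) ∉ R0set from h), zero_mul]

lemma integrable_ind {t : ℝ} (ht : 0 < t) {x : G} (ha : 0 < x.2.2) :
    Integrable ((SX x).indicator (heatK t)) ρG := by
  rw [integrable_indicator_iff (measurableSet_SX x)]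
  obtain ⟨C, hC, h⟩ := I0_bound
  refine ⟨(measurable_heatK t).aestronglyMeasurable, ?_⟩
  rw [hasFiniteIntegral_iff_norm]
  have : ∀ y, ENNReal.ofReal ‖heatK t y‖ = ENNReal.ofReal (heatK t y) := fun y => by
    rw [Real.norm_of_nonneg (heatK_nonneg ht y)]
  simp_rw [this]
  exact (h t ht x ha).trans_lt ENNReal.ofReal_lt_top

lemma ind_comp {t : ℝ} (L : ℝ) {x : G} (ha : 0 < x.2.2) :
    (fun y => (SX (trL L x)).indicator (heatK t) (shr (L / x.2.2) y))
      = (SX x).indicator (fun y => heatK t (shr (L / x.2.2) y)) := by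
  ext y
  by_cases h : y ∈ SX x
  · rw [indicator_of_mem h, indicator_of_mem ((shr_mem L ha y).2 h)]
  · rw [indicator_of_notMem h, indicator_of_notMem (fun h' => h ((shr_mem L ha y).1 h'))]

lemma measurable_ind (t : ℝ) (x : G) : Measurable ((SX x).indicator (heatK t)) :=
  (measurable_heatK t).indicator (measurableSet_SX x)

lemma integrable_ind_shr {t : ℝ} (ht : 0 < t) (L : ℝ) {x : G} (ha : 0 < x.2.2) :
    Integrable ((SX x).indicator (fun y => heatK t (shr (L / x.2.2) y))) ρG := by
  rw [← ind_comp L ha]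
  exact ((shear_mp (L / x.2.2)).integrable_comp
    (measurable_ind t (trL L x)).aestronglyMeasurable).2 (integrable_ind ht (x := trL L x) ha)

lemma conv_eq {t : ℝ} (ht : 0 < t) (L : ℝ) {x : G} (ha : 0 < x.2.2) :
    convHeat (fL L) t x
      = ∫ y in SX x, (heatK t (shr (L / x.2.2) y) - heatK t y) ∂ρG := by
  unfold convHeat
  rw [fL_mul_eq]
  have hi1 := integrable_ind ht (x := trL L x) ha
  have hi2 := integrable_ind ht ha
  rw [integral_sub hi1 hi2]
  have h1 : ∫ y, (SX (trL L x)).indicator (heatK t) y ∂ρG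
      = ∫ y, (SX x).indicator (fun y => heatK t (shr (L / x.2.2) y)) y ∂ρG := by
    rw [← ind_comp L ha]
    have hmp := shear_mp (L / x.2.2)
    have := integral_map (μ := ρG) (φ := shr (L / x.2.2)) (measurable_shr _).aemeasurable
      (f := (SX (trL L x)).indicator (heatK t)) (measurable_ind t (trL L x)).aestronglyMeasurable
    rw [← this]
    congr 1
    exact hmp.map_eq.symm
  rw [h1, ← integral_sub (integrable_ind_shr ht L ha) hi2, ← integral_indicator (measurableSet_SX x)]
  congr 1
  ext y
  by_cases h : y ∈ SX x <;> simp [h]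

lemma conv_near {t : ℝ} (ht : 0 < t) (L : ℝ) (x : G) :
    ENNReal.ofReal |convHeat (fL L) t x| ≤
      ∫⁻ y in SX (trL L x), ENNReal.ofReal (heatK t y) ∂ρG
      + ∫⁻ y in SX x, ENNReal.ofReal (heatK t y) ∂ρG := by
  unfold convHeat
  rw [fL_mul_eq, ← lintegral_indicator (measurableSet_SX _),
    ← lintegral_indicator (measurableSet_SX _), ← lintegral_add_left
      ((measurable_heatK t).ennreal_ofReal.indicator (measurableSet_SX _)),
    ← Real.norm_eq_abs, ofReal_norm_eq_enorm]
  refine (enorm_integral_le_lintegral_enorm _).trans ?_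
  apply lintegral_mono
  intro y
  refine enorm_sub_le.trans ?_
  apply add_le_add
  · by_cases h : y ∈ SX (trL L x)
    · rw [indicator_of_mem h, indicator_of_mem h, Real.enorm_eq_ofReal (heatK_nonneg ht y)]
    · simp [h]
  · by_cases h : y ∈ SX x
    · rw [indicator_of_mem h, indicator_of_mem h, Real.enorm_eq_ofReal (heatK_nonneg ht y)]
    · simp [h]

lemma diff_far {t L : ℝ} (ht : 0 < t) (hL : 10 ^ 6 ≤ L) {x y : G} (ha : 0 < x.2.2)
    (hx : 10 ^ 4 * L ≤ |x.1|) (hy : y ∈ SX x) :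
    |heatK t (shr (L / x.2.2) y) - heatK t y| ≤
      10 ^ 12 * (L / |x.1|) / (EG x * (U x.2.2 * Real.sqrt (U x.2.2))) := by
  have hL0 : 0 < L := by linarith
  have hX0 : 0 < |x.1| := by linarith
  have hQ : 10 ^ 6 ≤ DG x / x.2.2 := by
    have := DGa_ge_x ha; linarith
  have hW := WG_le ha hQ
  obtain ⟨b, z1, z2, hb1, hb2, hz1, hz2, hyd⟩ := SX_mem ha hy
  have hb0 : 0 < b := by linarith
  have hc := coshArg_SX_ge ha hb1 hb2 hz1 hz2
  have hc' := coshArg_SX_ge (x := trL L x) ha hb1 hb2 hz1 hz2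
  have ec := coshArg_SX (z1 := z1) (z2 := z2) ha hb0
  have ec' := coshArg_SX (x := trL L x) (z1 := z1) (z2 := z2) ha hb0
  have hy' : shr (L / x.2.2) y = (((trL L x).1 - z1) / b, ((trL L x).2.1 - z2) / b, (trL L x).2.2 / b) := by
    rw [hyd]
    simp only [shr, trL]
    ext
    · simp only; field_simp; ring
    · rfl
    · rfl
  rw [← hy'] at hc' ec'
  rw [← hyd] at hc ec
  set y' := shr (L / x.2.2) y with hy'd
  have hs : 0 < y.2.2 := by simp only [hyd]; positivity
  have hs' : y'.2.2 = y.2.2 := rfl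
  have hD := DG_pos x
  have hD' : DG x / 2 ≤ DG (trL L x) := by
    unfold DG trL
    simp only
    have h1 : 2 * x.1 * L ≤ 2 * |x.1| * L := by
      have := le_abs_self x.1; gcongr
    have h2 : 4 * |x.1| * L ≤ x.1 ^ 2 := by
      rw [← sq_abs]; nlinarith
    nlinarith [sq_nonneg x.2.2, sq_nonneg x.2.1, sq_nonneg L]
  have hX2 : |x.1| ^ 2 ≤ DG x := by
    rw [sq_abs]; unfold DG; nlinarith [sq_nonneg x.2.2, sq_nonneg x.2.1]
  set Q := DG x / x.2.2 with hQd
  have hcQ : Q / 540 ≤ coshArg y := by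
    have : 0 ≤ Q := by linarith
    linarith
  have hcQ' : Q / 540 ≤ coshArg y' := by
    refine le_trans ?_ hc'
    have : DG x / 2 / x.2.2 ≤ DG (trL L x) / x.2.2 := by gcongr
    have e : DG x / 2 / x.2.2 = Q / 2 := by rw [hQd]; ring
    rw [e] at this
    change _ ≤ DG (trL L x) / x.2.2 / 270
    linarith
  have hdiff : |coshArg y' - coshArg y| ≤ 6 * L * |x.1| / x.2.2 := by
    have hz : |2 * (x.1 - z1) - L| ≤ 4 * |x.1| := by
      have h1 := abs_le.1 hz1
      have h2 := neg_abs_le x.1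
      have h3 := le_abs_self x.1
      rw [abs_le]; constructor <;> linarith
    have e : coshArg y' - coshArg y = -(L * (2 * (x.1 - z1) - L)) / (2 * x.2.2 * b) := by
      rw [ec, ec']
      simp only [trL]
      rw [← sub_div]; congr 1; ring
    rw [e, abs_div, abs_neg, abs_mul, abs_of_pos hL0, abs_of_pos (show 0 < 2 * x.2.2 * b by positivity),
      div_le_div_iff₀ (by positivity) ha]
    calc L * |2 * (x.1 - z1) - L| * x.2.2 ≤ L * (4 * |x.1|) * x.2.2 := by gcongr
      _ = 6 * L * |x.1| * (2 * x.2.2 * (1/3)) := by ring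
      _ ≤ _ := by gcongr
  have hdsmall : 6 * L * |x.1| / x.2.2 ≤ Q / 540 / 2 := by
    have e : Q / 540 / 2 = DG x / 1080 / x.2.2 := by rw [hQd]; ring
    rw [e]
    gcongr
    nlinarith
  have hlog := log_big hQ
  have hsi : (y.2.2)⁻¹ ≤ 3 / x.2.2 := by
    simp only [hyd]; rw [inv_div]; gcongr
  have main : ∀ w w' : G, 0 < w.2.2 → w'.2.2 = w.2.2 → (w.2.2)⁻¹ ≤ 3 / x.2.2 →
      Q / 540 ≤ coshArg w → coshArg w ≤ coshArg w' →
      |coshArg w' - coshArg w| ≤ 6 * L * |x.1| / x.2.2 →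
      |heatK t w' - heatK t w| ≤
        10 ^ 12 * (L / |x.1|) / (EG x * (U x.2.2 * Real.sqrt (U x.2.2))) := by
    intro w w' hw hww hwi hcw hle hd
    rw [abs_of_nonneg (sub_nonneg.2 hle)] at hd
    refine (heatK_diff_le ht hw hww (by linarith) hle (by linarith)).trans ?_
    have hr := rG_ge hw hQ (by norm_num) (by norm_num) hcw
    have hwu : U x.2.2 * Real.sqrt (U x.2.2) ≤ (3 * Real.log Q) ^ 2 := by
      refine le_trans ?_ hW
      unfold WG
      have u1 := U_ge x.2.2
      have v1 : 1 ≤ Real.sqrt (V x.1) := Real.one_le_sqrt.2 (V_ge x.1)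
      exact le_mul_of_one_le_right (by positivity) v1
    have u1 := U_ge x.2.2
    have hE := EG_pos x
    have hED := EG_le x
    have hdd : 0 ≤ coshArg w' - coshArg w := sub_nonneg.2 hle
    have hlp : 0 < Real.log Q := by linarith
    have hQp : 0 < Q := by linarith
    have hwi0 : 0 < (w.2.2)⁻¹ := by positivity
    calc 1400 * (w.2.2)⁻¹ * (coshArg w' - coshArg w) / (rG w ^ 2 * coshArg w ^ 2)
        ≤ 1400 * (3 / x.2.2) * (6 * L * |x.1| / x.2.2) / ((Real.log Q / 2) ^ 2 * (Q / 540) ^ 2) := by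
          gcongr
      _ = (1400 * 3 * 6 * 4 * 540 ^ 2 * 9) * (L / |x.1|) * (|x.1| ^ 2 / DG x) / (DG x * (3 * Real.log Q) ^ 2) := by
          rw [hQd]; field_simp; ring
      _ ≤ (1400 * 3 * 6 * 4 * 540 ^ 2 * 9) * (L / |x.1|) * 1 / (DG x * (3 * Real.log Q) ^ 2) := by
          gcongr
          exact (div_le_one hD).2 hX2
      _ ≤ 10 ^ 12 * (L / |x.1|) / (EG x * (U x.2.2 * Real.sqrt (U x.2.2))) := by
          rw [mul_one]
          gcongr
          norm_num
  rcases le_total (coshArg y) (coshArg y') with h | h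
  · exact main y y' hs hs' hsi hcQ h hdiff
  · rw [abs_sub_comm]
    refine main y' y hs rfl hsi hcQ' h ?_
    rw [abs_sub_comm]; exact hdiff

lemma conv_far {t L : ℝ} (ht : 0 < t) (hL : 10 ^ 6 ≤ L) {x : G} (ha : 0 < x.2.2)
    (hx : 10 ^ 4 * L ≤ |x.1|) :
    ENNReal.ofReal |convHeat (fL L) t x| ≤
      ENNReal.ofReal (288 * 10 ^ 12 * (L / |x.1|) / (EG x * (U x.2.2 * Real.sqrt (U x.2.2)))) := by
  rw [conv_eq ht L ha, ← Real.norm_eq_abs, ofReal_norm_eq_enorm]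
  refine (enorm_integral_le_lintegral_enorm _).trans ?_
  set q := 10 ^ 12 * (L / |x.1|) / (EG x * (U x.2.2 * Real.sqrt (U x.2.2))) with hq
  have hq0 : 0 ≤ q := by
    have := EG_pos x
    have := U_ge x.2.2
    have hL0 : 0 < L := by linarith
    positivity
  calc ∫⁻ y in SX x, ‖heatK t (shr (L / x.2.2) y) - heatK t y‖ₑ ∂ρG
      ≤ ∫⁻ y in SX x, ENNReal.ofReal q ∂ρG := by
        apply setLIntegral_mono measurable_const
        intro y hy
        rw [← ofReal_norm_eq_enorm, Real.norm_eq_abs]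
        exact ENNReal.ofReal_le_ofReal (diff_far ht hL ha hx hy)
    _ = ENNReal.ofReal q * ρG (SX x) := setLIntegral_const _ _
    _ ≤ ENNReal.ofReal q * ENNReal.ofReal 288 := by gcongr; exact rho_SX_le ha
    _ = _ := by
        rw [← ENNReal.ofReal_mul hq0]
        congr 1; rw [hq]; ring

lemma max_bound : ∃ C : ℝ, 0 < C ∧ ∀ L : ℝ, 10 ^ 6 ≤ L → ∀ x : G, 0 < x.2.2 →
    (maxHeat (fL L) x ≤ ENNReal.ofReal (C / (EG (trL L x) * WG (trL L x)))
        + ENNReal.ofReal (C / (EG x * WG x))) ∧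
    (10 ^ 4 * L ≤ |x.1| → maxHeat (fL L) x ≤
      ENNReal.ofReal (C * (L / |x.1|) / (EG x * (U x.2.2 * Real.sqrt (U x.2.2))))) := by
  obtain ⟨C, hC, h⟩ := I0_bound
  refine ⟨C + 288 * 10 ^ 12, by positivity, ?_⟩
  intro L hL x ha
  have hE := EG_pos x
  have hW := WG_pos x
  have hE' := EG_pos (trL L x)
  have hW' := WG_pos (trL L x)
  constructor
  · unfold maxHeat
    refine iSup₂_le fun t ht => ?_
    refine (conv_near ht L x).trans ?_
    apply add_le_add
    · refine (h t ht (trL L x) ha).trans ?_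
      apply ENNReal.ofReal_le_ofReal
      gcongr; linarith
    · refine (h t ht x ha).trans ?_
      apply ENNReal.ofReal_le_ofReal
      gcongr; linarith
  · intro hx
    unfold maxHeat
    refine iSup₂_le fun t ht => ?_
    refine (conv_far ht hL ha hx).trans ?_
    apply ENNReal.ofReal_le_ofReal
    have := U_ge x.2.2
    have hL0 : 0 < L := by linarith
    gcongr; linarith

lemma lint_cauchy {b : ℝ} (hb : 0 < b) :
    ∫⁻ v : ℝ, ENNReal.ofReal (1 / (b ^ 2 + v ^ 2)) = ENNReal.ofReal (π / b) := by
  have e : ∀ v : ℝ, 1 / (b ^ 2 + v ^ 2) = (b ^ 2)⁻¹ * (1 + (v / b) ^ 2)⁻¹ := by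
    intro v
    have : b ^ 2 + v ^ 2 = b ^ 2 * (1 + (v / b) ^ 2) := by field_simp
    rw [this, one_div, mul_inv]
  have hint : Integrable (fun v : ℝ => (b ^ 2)⁻¹ * (1 + (v / b) ^ 2)⁻¹) :=
    (integrable_inv_one_add_sq.comp_div hb.ne').const_mul _
  simp_rw [e]
  rw [← ofReal_integral_eq_lintegral_ofReal hint (Eventually.of_forall fun v => by positivity)]
  congr 1
  rw [integral_const_mul, Measure.integral_comp_div (fun v : ℝ => (1 + v ^ 2)⁻¹) b,
    integral_univ_inv_one_add_sq, abs_of_pos hb, smul_eq_mul]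
  field_simp

lemma lint_x2 (s : ℝ) :
    ∫⁻ v : ℝ, ENNReal.ofReal (1 / (1 + s ^ 2 + v ^ 2)) ≤ ENNReal.ofReal (2 * π / (1 + |s|)) := by
  have hb : 0 < √(1 + s ^ 2) := by positivity
  have := lint_cauchy hb
  rw [Real.sq_sqrt (by positivity)] at this
  rw [this]
  apply ENNReal.ofReal_le_ofReal
  have h : (1 + |s|) / 2 ≤ √(1 + s ^ 2) := by
    apply Real.le_sqrt_of_sq_le
    nlinarith [sq_abs s, abs_nonneg s, sq_nonneg (1 - |s|)]
  have h0 : 0 < (1 + |s|) / 2 := by positivity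
  calc π / √(1 + s ^ 2) ≤ π / ((1 + |s|) / 2) := by gcongr
    _ = 2 * π / (1 + |s|) := by field_simp

def HG (Φ : ℝ → ℝ≥0∞) (x : G) : ℝ≥0∞ :=
  Φ x.1 * (ENNReal.ofReal (1 / EG x) * ENNReal.ofReal (1 / (U x.2.2 * √(U x.2.2))))

def KG : ℝ≥0∞ := ∫⁻ s, ENNReal.ofReal (1 / (U s * √(U s))) ∂nuG

lemma measurable_U : Measurable U := by unfold U; fun_prop

lemma measurable_V : Measurable V := by unfold V; fun_prop

lemma measurable_HG {Φ : ℝ → ℝ≥0∞} (hΦ : Measurable Φ) : Measurable (HG Φ) := by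
  unfold HG EG
  have := measurable_U
  fun_prop

lemma HG_int {Φ : ℝ → ℝ≥0∞} (hΦ : Measurable Φ) :
    ∫⁻ x, HG Φ x ∂ρG ≤ (∫⁻ s, Φ s * ENNReal.ofReal (2 * π / (1 + |s|))) * KG := by
  rw [rhoG_eq, lintegral_prod _ (measurable_HG hΦ).aemeasurable]
  have hU := measurable_U
  have h1 : ∀ s : ℝ, ∫⁻ y, HG Φ (s, y) ∂((volume : Measure ℝ).prod nuG) ≤
      (Φ s * ENNReal.ofReal (2 * π / (1 + |s|))) * KG := by
    intro s
    unfold HG EG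
    simp only
    rw [lintegral_const_mul _ (by fun_prop)]
    rw [lintegral_prod_mul (f := fun v : ℝ => ENNReal.ofReal (1 / (1 + s ^ 2 + v ^ 2)))
      (g := fun a : ℝ => ENNReal.ofReal (1 / (U a * √(U a)))) (by fun_prop) (by fun_prop)]
    rw [mul_assoc]
    gcongr
    · exact lint_x2 s
    · exact le_rfl
  refine (lintegral_mono h1).trans ?_
  rw [lintegral_mul_const]
  fun_prop

lemma int_half {T : ℝ} (hT : 0 ≤ T) :
    ∫ s in (0:ℝ)..T, 1 / ((1 + |s|) * √(V s)) = 2 * √(V T) - 2 := by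
  have e : ∫ s in (0:ℝ)..T, 1 / ((1 + |s|) * √(V s)) =
      ∫ s in (0:ℝ)..T, 1 / ((1 + s) * √(1 + log (1 + s))) := by
    apply intervalIntegral.integral_congr
    intro s hs
    rw [uIcc_of_le hT] at hs
    simp only [V, abs_of_nonneg hs.1]
  have hpos : ∀ s ∈ uIcc 0 T, 0 < 1 + s ∧ 0 < 1 + log (1 + s) := by
    intro s hs
    rw [uIcc_of_le hT] at hs
    have := Real.log_nonneg (x := 1 + s) (by linarith [hs.1])
    constructor <;> linarith [hs.1]
  rw [e, intervalIntegral.integral_eq_sub_of_hasDerivAt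
    (f := fun s => 2 * √(1 + log (1 + s)))]
  · simp [V, abs_of_nonneg hT]
  · intro s hs
    obtain ⟨h1, h2⟩ := hpos s hs
    have d1 : HasDerivAt (fun s : ℝ => 1 + s) 1 s := by
      simpa using (hasDerivAt_id s).const_add 1
    have d2 := ((d1.log h1.ne').const_add 1).sqrt h2.ne'
    have d3 := d2.const_mul 2
    refine d3.congr_deriv ?_
    field_simp
  · apply ContinuousOn.intervalIntegrable
    intro s hs
    obtain ⟨h1, h2⟩ := hpos s hs
    apply ContinuousAt.continuousWithinAt
    have hh : (1 + s) * √(1 + log (1 + s)) ≠ 0 := by positivity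
    have : ContinuousAt (fun s => log (1 + s)) s :=
      ContinuousAt.log (by fun_prop) h1.ne'
    fun_prop (disch := assumption)

lemma cont_near : Continuous (fun s : ℝ => 1 / ((1 + |s|) * √(V s))) := by
  have hV : Continuous V := by
    unfold V
    refine continuous_const.add (Continuous.log (by fun_prop) ?_)
    intro x; positivity
  refine Continuous.div₀ continuous_const (by fun_prop) ?_
  intro x
  have := V_ge x
  have h1 : 0 < 1 + |x| := by positivity
  have : 0 < √(V x) := by positivity
  positivity

lemma lint_near {T : ℝ} (hT : 0 ≤ T) :
    ∫⁻ s in Icc (-T) T, ENNReal.ofReal (1 / ((1 + |s|) * √(V s))) ≤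
      ENNReal.ofReal (4 * √(V T)) := by
  have hc := cont_near
  rw [← ofReal_integral_eq_lintegral_ofReal
    (hc.continuousOn.integrableOn_compact isCompact_Icc)
    (Eventually.of_forall fun v => by positivity)]
  apply ENNReal.ofReal_le_ofReal
  rw [integral_Icc_eq_integral_Ioc, ← intervalIntegral.integral_of_le (by linarith),
    ← intervalIntegral.integral_add_adjacent_intervals (b := 0)
      (hc.intervalIntegrable _ _) (hc.intervalIntegrable _ _)]
  have h2 := intervalIntegral.integral_comp_neg (a := 0) (b := T)
    (fun s : ℝ => 1 / ((1 + |s|) * √(V s)))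
  simp only [neg_zero, V, abs_neg] at h2
  have h3 := int_half hT
  simp only [V] at *
  rw [← h2, h3]
  linarith

lemma mf_upper : ∃ C > 0, ∀ L : ℝ, 10 ^ 6 ≤ L →
    ∫⁻ x, maxHeat (fL L) x ∂ρG ≤ ENNReal.ofReal (C * √(V (10 ^ 5 * L))) := by
  obtain ⟨C, hC, h⟩ := max_bound
  have hK : KG ≠ ⊤ := nuG_int_finite.ne
  have hK0 : 0 ≤ KG.toReal := ENNReal.toReal_nonneg
  refine ⟨(16 * π * C + 4 * π ^ 2 * C) * KG.toReal + 1, by positivity, fun L hL => ?_⟩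
  have hL0 : 0 < L := by linarith
  set T := 10 ^ 5 * L with hTdef
  set Φ : ℝ → ℝ≥0∞ := (Icc (-T) T).indicator (fun s => ENNReal.ofReal (C / √(V s))) with hΦ
  set Ψ : ℝ → ℝ≥0∞ := (fun s => ENNReal.ofReal (2 * C * L * (1 + |s|) / (L ^ 2 + s ^ 2))) with hΨ
  have mV := measurable_V
  have mΦ : Measurable Φ := Measurable.indicator (by fun_prop) measurableSet_Icc
  have mΨ : Measurable Ψ := by rw [hΨ]; fun_prop
  have key : ∀ᵐ x ∂ρG, maxHeat (fL L) x ≤ HG Φ (trL L x) + HG Φ x + HG Ψ x := by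
    filter_upwards [rhoG_ae_pos] with x hx
    obtain ⟨hn, hf⟩ := h L hL x hx
    rcases le_or_gt (10 ^ 4 * L) |x.1| with hx1 | hx1
    · refine (hf hx1).trans (le_trans ?_ le_add_self)
      unfold HG
      have := U_ge x.2.2
      have := EG_pos x
      rw [hΨ, ← ENNReal.ofReal_mul (by positivity), ← ENNReal.ofReal_mul (by positivity)]
      apply ENNReal.ofReal_le_ofReal
      have hx0 : 0 < |x.1| := by nlinarith
      have e1 : C * (L / |x.1|) / (EG x * (U x.2.2 * √(U x.2.2))) =
        C * (L / |x.1|) * (1 / EG x * (1 / (U x.2.2 * √(U x.2.2)))) := by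
        rw [div_eq_mul_one_div, one_div_mul_one_div]
      rw [e1]
      apply mul_le_mul_of_nonneg_right _ (by positivity)
      rw [← mul_div_assoc, div_le_div_iff₀ hx0 (by positivity)]
      have a1 : x.1 ^ 2 = |x.1| ^ 2 := (sq_abs _).symm
      have a2 : L ≤ |x.1| := by nlinarith
      have a3 : L ^ 2 + x.1 ^ 2 ≤ 2 * (1 + |x.1|) * |x.1| := by rw [a1]; nlinarith
      calc C * L * (L ^ 2 + x.1 ^ 2) ≤ C * L * (2 * (1 + |x.1|) * |x.1|) := by gcongr
        _ = _ := by ring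
    · refine hn.trans (le_trans ?_ le_self_add)
      have B : ∀ z : G, |z.1| ≤ T → ENNReal.ofReal (C / (EG z * WG z)) ≤ HG Φ z := by
        intro z hz
        unfold HG
        have hz' : z.1 ∈ Icc (-T) T := abs_le.1 hz
        rw [hΦ, indicator_of_mem hz']
        have := U_ge z.2.2
        have := V_ge z.1
        have := EG_pos z
        rw [← ENNReal.ofReal_mul (by positivity), ← ENNReal.ofReal_mul (by positivity)]
        apply ENNReal.ofReal_le_ofReal
        apply le_of_eq
        unfold WG
        field_simp
      gcongr
      · apply B
        simp only [trL]
        have := abs_sub x.1 L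
        rw [abs_of_pos hL0] at this
        linarith
      · apply B; linarith
  refine (lintegral_mono_ae key).trans ?_
  have mH := measurable_HG mΦ
  have mH' := measurable_HG mΨ
  have mtr : Measurable (trL L) := by unfold trL; fun_prop
  rw [lintegral_add_right _ mH', lintegral_add_right _ mH]
  have et : ∫⁻ x, HG Φ (trL L x) ∂ρG = ∫⁻ x, HG Φ x ∂ρG :=
    (trans_mp L).lintegral_comp mH
  rw [et]
  have b1 : ∫⁻ x, HG Φ x ∂ρG ≤ ENNReal.ofReal (8 * π * C * √(V T) * KG.toReal) := by
    refine (HG_int mΦ).trans ?_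
    rw [ENNReal.ofReal_mul (by positivity), ENNReal.ofReal_toReal hK]
    gcongr
    calc ∫⁻ s, Φ s * ENNReal.ofReal (2 * π / (1 + |s|))
        = ∫⁻ s in Icc (-T) T, ENNReal.ofReal (2 * π * C) *
            ENNReal.ofReal (1 / ((1 + |s|) * √(V s))) := by
          rw [← lintegral_indicator measurableSet_Icc]
          apply lintegral_congr
          intro s
          by_cases hs : s ∈ Icc (-T) T
          · rw [hΦ, indicator_of_mem hs, indicator_of_mem hs,
              ← ENNReal.ofReal_mul (by positivity), ← ENNReal.ofReal_mul (by positivity)]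
            congr 1
            have := V_ge s
            field_simp
          · rw [hΦ, indicator_of_notMem hs, indicator_of_notMem hs, zero_mul]
      _ ≤ ENNReal.ofReal (2 * π * C) * ENNReal.ofReal (4 * √(V T)) := by
          rw [lintegral_const_mul' _ _ ENNReal.ofReal_ne_top]
          gcongr
          exact lint_near (by positivity)
      _ = _ := by
          rw [← ENNReal.ofReal_mul (by positivity)]
          congr 1; ring
  have b2 : ∫⁻ x, HG Ψ x ∂ρG ≤ ENNReal.ofReal (4 * π ^ 2 * C * KG.toReal) := by
    refine (HG_int mΨ).trans ?_
    rw [ENNReal.ofReal_mul (by positivity), ENNReal.ofReal_toReal hK]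
    gcongr
    calc ∫⁻ s, Ψ s * ENNReal.ofReal (2 * π / (1 + |s|))
        = ∫⁻ s, ENNReal.ofReal (4 * π * C * L) * ENNReal.ofReal (1 / (L ^ 2 + s ^ 2)) := by
          apply lintegral_congr
          intro s
          rw [hΨ, ← ENNReal.ofReal_mul (by positivity), ← ENNReal.ofReal_mul (by positivity)]
          congr 1
          field_simp
          ring
      _ = ENNReal.ofReal (4 * π * C * L) * ENNReal.ofReal (π / L) := by
          rw [lintegral_const_mul' _ _ ENNReal.ofReal_ne_top, lint_cauchy hL0]
      _ = ENNReal.ofReal (4 * π ^ 2 * C) := by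
          rw [← ENNReal.ofReal_mul (by positivity)]
          congr 1; field_simp
      _ ≤ _ := le_rfl
  refine (add_le_add (add_le_add b1 b1) b2).trans ?_
  rw [← ENNReal.ofReal_add (by positivity) (by positivity),
    ← ENNReal.ofReal_add (by positivity) (by positivity)]
  apply ENNReal.ofReal_le_ofReal
  have hV1 : 1 ≤ √(V T) := by
    rw [Real.one_le_sqrt]; exact V_ge T
  have : 4 * π ^ 2 * C * KG.toReal * 1 ≤ 4 * π ^ 2 * C * KG.toReal * √(V T) := by gcongr
  nlinarith

lemma boxS_pos : 0 < ρG (Icc (-(1/10):ℝ) 0 ×ˢ (Icc (-(1/10):ℝ) (1/10) ×ˢ Icc (1:ℝ) (11/10))) := by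
  rw [rhoG_prod]
  have := nuG_Icc_pos (c := 1) (d := 11/10) (by norm_num) (by norm_num)
  rw [Real.volume_Icc, Real.volume_Icc]
  refine ENNReal.mul_pos ?_ (ENNReal.mul_pos ?_ this.ne').ne'
  · simp only [ne_eq, ENNReal.ofReal_eq_zero, not_le]; norm_num
  · simp only [ne_eq, ENNReal.ofReal_eq_zero, not_le]; norm_num

lemma box_sub {x : G} (hx : x ∈ Icc (-(1/10):ℝ) 0 ×ˢ (Icc (-(1/10):ℝ) (1/10) ×ˢ Icc (1:ℝ) (11/10))) :
    Icc (-(1/10):ℝ) 0 ×ˢ (Icc (-(1/10):ℝ) (1/10) ×ˢ Icc (1:ℝ) (11/10)) ⊆ SX x := by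
  rintro ⟨y1, y2, s⟩ hy
  obtain ⟨x1, x2, a⟩ := x
  simp only [SX, gMul, gInv, R0set, mem_ofPred_eq, mem_prod, mem_Icc] at hx hy ⊢
  obtain ⟨⟨h1, h2⟩, ⟨h3, h4⟩, h5, h6⟩ := hx
  obtain ⟨⟨k1, k2⟩, ⟨k3, k4⟩, k5, k6⟩ := hy
  have hs : 0 < s := by linarith
  have hq1 : 1 / 2 ≤ a / s := by rw [le_div_iff₀ hs]; linarith
  have hq2 : a / s ≤ 2 := by rw [div_le_iff₀ hs]; linarith
  have e1 : a * (-y1 / s) = -(a / s * y1) := by ring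
  have e2 : a * (-y2 / s) = -(a / s * y2) := by ring
  have e3 : a * (1 / s) = a / s := by ring
  rw [e1, e2, e3]
  have E1 : exp (-1) ≤ 1 / 2 := by
    rw [Real.exp_neg, one_div]
    apply inv_anti₀ (by norm_num)
    linarith [Real.exp_one_gt_d9]
  have E2 : 2 ≤ exp 1 := by linarith [Real.exp_one_gt_d9]
  refine ⟨⟨?_, ?_⟩, ⟨?_, ?_⟩, ?_, ?_⟩ <;> first | linarith | nlinarith

lemma conv_neg {L : ℝ} (hL : 2 < L) {x : G}
    (hx : x ∈ Icc (-(1/10):ℝ) 0 ×ˢ (Icc (-(1/10):ℝ) (1/10) ×ˢ Icc (1:ℝ) (11/10))) :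
    convHeat (fL L) 1 x < 0 := by
  have hbox := box_sub hx
  simp only [mem_prod, mem_Icc] at hx
  have ha : 0 < x.2.2 := by linarith [hx.2.2.1]
  rw [conv_eq one_pos L ha]
  have hlt : ∀ y ∈ SX x, heatK 1 (shr (L / x.2.2) y) < heatK 1 y := by
    intro y hy
    obtain ⟨b, z1, z2, hb1, hb2, hz1, hz2, rfl⟩ := SX_mem ha hy
    have hb : 0 < b := by linarith
    apply heatK_strict one_pos
    · simp only; positivity
    · simp [shr]
    · have e : shr (L / x.2.2) ((x.1 - z1) / b, (x.2.1 - z2) / b, x.2.2 / b) =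
          ((x.1 - (z1 + L)) / b, (x.2.1 - z2) / b, x.2.2 / b) := by
        simp only [shr, Prod.mk.injEq, and_true]
        field_simp
        ring
      rw [e, coshArg_SX ha hb, coshArg_SX ha hb]
      have := abs_le.1 hz1
      have : (x.1 - z1) ^ 2 < (x.1 - (z1 + L)) ^ 2 := by nlinarith [hx.1.2]
      gcongr
  have hi1 := (integrable_indicator_iff (measurableSet_SX x)).1 (integrable_ind one_pos ha)
  have hi2 := (integrable_indicator_iff (measurableSet_SX x)).1 (integrable_ind_shr one_pos L ha)
  have hpos : 0 < ∫ y in SX x, (heatK 1 y - heatK 1 (shr (L / x.2.2) y)) ∂ρG := by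
    rw [setIntegral_pos_iff_support_of_nonneg_ae]
    · refine boxS_pos.trans_le (measure_mono ?_)
      intro y hy
      have := hbox hy
      exact ⟨by rw [Function.mem_support]; linarith [hlt y this], this⟩
    · filter_upwards [ae_restrict_mem (measurableSet_SX x)] with y hy
      simp only [Pi.zero_apply]
      linarith [hlt y hy]
    · exact hi1.sub hi2
  have : ∫ y in SX x, (heatK 1 (shr (L / x.2.2) y) - heatK 1 y) ∂ρG =
      - ∫ y in SX x, (heatK 1 y - heatK 1 (shr (L / x.2.2) y)) ∂ρG := by
    rw [← integral_neg]; congr 1; ext y; ring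
  rw [this]; linarith

lemma measurable_fL (L : ℝ) : Measurable (fL L) := by
  unfold fL
  exact (measurable_const.indicator (measurableSet_RL L)).sub
    (measurable_const.indicator measurableSet_R0)

lemma measurable_conv (L : ℝ) : Measurable (convHeat (fL L) 1) := by
  unfold convHeat
  have : Measurable (fun p : G × G => fL L (gMul p.1 (gInv p.2)) * heatK 1 p.2) :=
    ((measurable_fL L).comp measurable_gg).mul ((measurable_heatK 1).comp measurable_snd)
  exact (this.stronglyMeasurable.integral_prod_right' (ν := ρG)).measurable

lemma mf_pos {L : ℝ} (hL : 2 < L) : 0 < ∫⁻ x, maxHeat (fL L) x ∂ρG := by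
  rw [pos_iff_ne_zero]
  intro h0
  have h1 : ∫⁻ x, ENNReal.ofReal |convHeat (fL L) 1 x| ∂ρG = 0 := by
    refine le_antisymm ?_ bot_le
    rw [← h0]
    apply lintegral_mono
    intro x
    unfold maxHeat
    exact le_iSup₂ (f := fun (t : ℝ) (_ : 0 < t) => ENNReal.ofReal |convHeat (fL L) t x|) 1 one_pos
  have mc := measurable_conv L
  rw [lintegral_eq_zero_iff (by fun_prop)] at h1
  have := boxS_pos
  refine this.ne' (measure_mono_null ?_ (ae_iff.1 h1))
  intro x hx
  have := conv_neg hL hx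
  simp only [mem_ofPred_eq, Pi.zero_apply, ENNReal.ofReal_eq_zero, not_le]
  exact abs_pos.2 this.ne

lemma int_log {m : ℝ} (hm : 0 ≤ m) :
    ∫ s in (0:ℝ)..m, (log (1 + m) - log (1 + |s|)) ≤ m := by
  have e : ∫ s in (0:ℝ)..m, (log (1 + m) - log (1 + |s|)) =
      ∫ s in (0:ℝ)..m, (log (1 + m) - log (1 + s)) := by
    apply intervalIntegral.integral_congr
    intro s hs
    rw [uIcc_of_le hm] at hs
    simp only [abs_of_nonneg hs.1]
  have hpos : ∀ s ∈ uIcc 0 m, 0 < 1 + s := by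
    intro s hs
    rw [uIcc_of_le hm] at hs
    linarith [hs.1]
  rw [e, intervalIntegral.integral_eq_sub_of_hasDerivAt
    (f := fun s => s * log (1 + m) - ((1 + s) * log (1 + s) - s))]
  · have := Real.log_nonneg (x := 1 + m) (by linarith)
    simp
    nlinarith
  · intro s hs
    have h1 := hpos s hs
    have d1 : HasDerivAt (fun s : ℝ => 1 + s) 1 s := by
      simpa using (hasDerivAt_id s).const_add 1
    have d2 := ((hasDerivAt_id s).mul_const (log (1 + m))).sub
      ((d1.mul (d1.log h1.ne')).sub (hasDerivAt_id s))
    refine d2.congr_deriv ?_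
    field_simp
    ring
  · apply ContinuousOn.intervalIntegrable
    intro s hs
    have h1 := hpos s hs
    apply ContinuousAt.continuousWithinAt
    have : ContinuousAt (fun s => log (1 + s)) s :=
      ContinuousAt.log (by fun_prop) h1.ne'
    fun_prop

lemma cont_log : Continuous (fun s : ℝ => log (1 + |s|)) :=
  Continuous.log (by fun_prop) (fun x => by positivity)

lemma lint_log {m : ℝ} (hm : 0 ≤ m) :
    ∫⁻ s in Icc (-m) m, ENNReal.ofReal |log (1 + |s|) - log (1 + m)| ≤ ENNReal.ofReal (2 * m) := by
  have hc : Continuous (fun s : ℝ => log (1 + m) - log (1 + |s|)) := continuous_const.sub cont_log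
  have e : ∫⁻ s in Icc (-m) m, ENNReal.ofReal |log (1 + |s|) - log (1 + m)| =
      ∫⁻ s in Icc (-m) m, ENNReal.ofReal (log (1 + m) - log (1 + |s|)) := by
    apply setLIntegral_congr_fun measurableSet_Icc
    intro s hs
    have : |s| ≤ m := abs_le.2 hs
    have h2 : log (1 + |s|) ≤ log (1 + m) := Real.log_le_log (by positivity) (by linarith)
    simp only
    rw [abs_of_nonpos (by linarith), neg_sub]
  rw [e, ← ofReal_integral_eq_lintegral_ofReal
    (hc.continuousOn.integrableOn_compact isCompact_Icc)]
  · apply ENNReal.ofReal_le_ofReal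
    rw [integral_Icc_eq_integral_Ioc, ← intervalIntegral.integral_of_le (by linarith),
      ← intervalIntegral.integral_add_adjacent_intervals (b := 0)
        (hc.intervalIntegrable _ _) (hc.intervalIntegrable _ _)]
    have h2 := intervalIntegral.integral_comp_neg (a := 0) (b := m)
      (fun s : ℝ => log (1 + m) - log (1 + |s|))
    simp only [neg_zero, abs_neg] at h2
    have h3 := int_log hm
    rw [← h2]
    linarith
  · filter_upwards [ae_restrict_mem measurableSet_Icc] with s hs
    have : |s| ≤ m := abs_le.2 hs
    have h2 : log (1 + |s|) ≤ log (1 + m) := Real.log_le_log (by positivity) (by linarith)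
    simp only [Pi.zero_apply]
    linarith

lemma log_osc (p : ℝ) {l : ℝ} (hl : 0 < l) : ∃ c : ℝ,
    ∫⁻ s in Icc (p - l / 2) (p + l / 2), ENNReal.ofReal |log (1 + |s|) - c| ≤
      ENNReal.ofReal (4 * l) := by
  set m := |p| + l / 2 with hm
  have hm0 : 0 ≤ m := by positivity
  have hsm : ∀ s ∈ Icc (p - l / 2) (p + l / 2), |s| ≤ m ∧ m - l ≤ |s| := by
    intro s hs
    have h1 : |s - p| ≤ l / 2 := abs_le.2 ⟨by linarith [hs.1], by linarith [hs.2]⟩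
    have h2 := abs_sub_abs_le_abs_sub s p
    have h3 := abs_sub_abs_le_abs_sub p s
    rw [abs_sub_comm p s] at h3
    constructor <;> linarith
  refine ⟨log (1 + m), ?_⟩
  rcases le_or_gt (2 * l) m with h | h
  · calc _ ≤ ∫⁻ s in Icc (p - l / 2) (p + l / 2), 1 := by
          apply setLIntegral_mono measurable_const
          intro s hs
          obtain ⟨h1, h2⟩ := hsm s hs
          rw [← ENNReal.ofReal_one]
          apply ENNReal.ofReal_le_ofReal
          have a1 : log (1 + |s|) ≤ log (1 + m) := Real.log_le_log (by positivity) (by linarith)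
          have a2 : log (1 + m) ≤ log (2 * (1 + |s|)) :=
            Real.log_le_log (by positivity) (by linarith)
          rw [Real.log_mul (by norm_num) (by positivity)] at a2
          rw [abs_of_nonpos (by linarith)]
          linarith [Real.log_two_lt_d9]
      _ = ENNReal.ofReal l := by
          rw [setLIntegral_one, Real.volume_Icc]; congr 1; ring
      _ ≤ _ := ENNReal.ofReal_le_ofReal (by linarith)
  · refine (lintegral_mono_set (t := Icc (-m) m) ?_).trans ((lint_log hm0).trans ?_)
    · intro s hs
      exact abs_le.1 (hsm s hs).1
    · exact ENNReal.ofReal_le_ofReal (by linarith)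

def hL (L s : ℝ) : ℝ := min (log (1 + |s|)) (log (1 + L))

lemma measurable_hL (L : ℝ) : Measurable (hL L) := by
  unfold hL; fun_prop

lemma hL_abs {L : ℝ} (h : 0 ≤ L) (s : ℝ) : |hL L s| ≤ log (1 + L) := by
  have h1 : 0 ≤ log (1 + |s|) := Real.log_nonneg (by linarith [abs_nonneg s])
  have h2 : 0 ≤ log (1 + L) := Real.log_nonneg (by linarith)
  unfold hL
  rw [abs_of_nonneg (le_min h1 h2)]
  exact min_le_right _ _

lemma hL_osc (L p : ℝ) {l : ℝ} (hl : 0 < l) : ∃ c : ℝ,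
    ∫⁻ s in Icc (p - l / 2) (p + l / 2), ENNReal.ofReal |hL L s - c| ≤
      ENNReal.ofReal (4 * l) := by
  obtain ⟨c, hc⟩ := log_osc p hl
  refine ⟨min c (log (1 + L)), (lintegral_mono fun s => ?_).trans hc⟩
  apply ENNReal.ofReal_le_ofReal
  have := abs_min_sub_min_le_max (log (1 + |s|)) (log (1 + L)) c (log (1 + L))
  simpa [hL] using this

lemma cz_measure {R : Set G} {c : G} {l r : ℝ} (hc : 0 < c.2.2) (hl : 0 < l) (hr : 0 < r)
    (hR : R = Set.Icc (c.1 - l/2) (c.1 + l/2) ×ˢ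
        (Set.Icc (c.2.1 - l/2) (c.2.1 + l/2) ×ˢ
         Set.Icc (c.2.2 * Real.exp (-r)) (c.2.2 * Real.exp r))) :
    0 < ρG R ∧ ρG R < ⊤ := by
  have h1 : 0 < c.2.2 * exp (-r) := by positivity
  have h2 : c.2.2 * exp (-r) < c.2.2 * exp r := by gcongr; linarith
  have p := nuG_Icc_pos h1 h2
  have f := nuG_Icc_lt_top (d := c.2.2 * exp r) h1
  rw [hR, rhoG_prod, Real.volume_Icc, Real.volume_Icc]
  constructor
  · refine ENNReal.mul_pos ?_ (ENNReal.mul_pos ?_ p.ne').ne'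
    · simp only [ne_eq, ENNReal.ofReal_eq_zero, not_le]; linarith
    · simp only [ne_eq, ENNReal.ofReal_eq_zero, not_le]; linarith
  · exact ENNReal.mul_lt_top ENNReal.ofReal_lt_top (ENNReal.mul_lt_top ENNReal.ofReal_lt_top f)

lemma cz_osc (L : ℝ) {R : Set G} (hR : IsCZ R) : ∃ c : ℝ,
    ∫⁻ x in R, ENNReal.ofReal |hL L x.1 - c| ∂ρG ≤ 4 * ρG R := by
  obtain ⟨z, l, r, hz, hl, hr, rfl, -, -⟩ := hR
  obtain ⟨c, hc⟩ := hL_osc L z.1 hl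
  refine ⟨c, ?_⟩
  have mh := measurable_hL L
  rw [rhoG_prod]
  rw [rhoG_eq, ← Measure.prod_restrict, ← Measure.prod_restrict]
  have := lintegral_prod_mul (μ := (volume : Measure ℝ).restrict (Icc (z.1 - l/2) (z.1 + l/2)))
    (ν := ((volume : Measure ℝ).restrict (Icc (z.2.1 - l/2) (z.2.1 + l/2))).prod
      (nuG.restrict (Icc (z.2.2 * exp (-r)) (z.2.2 * exp r))))
    (f := fun s => ENNReal.ofReal |hL L s - c|) (g := fun _ => 1) (by fun_prop) (by fun_prop)
  simp only [mul_one] at this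
  rw [this, lintegral_one, Measure.prod_restrict, Measure.restrict_apply_univ, Measure.prod_prod,
    ← mul_assoc 4]
  refine mul_le_mul_left ?_ _
  refine hc.trans ?_
  rw [Real.volume_Icc, ENNReal.ofReal_mul (by norm_num)]
  apply le_of_eq
  congr 1
  · norm_num
  · congr 1; ring

lemma integrable_mul_g {L : ℝ} (h0 : 0 ≤ L) {f : G → ℝ} (hf : Integrable f ρG) (c : ℝ) :
    Integrable (fun x => f x * (hL L x.1 - c)) ρG := by
  have mh := measurable_hL L
  refine hf.mul_bdd (c := log (1 + L) + |c|)
    (Measurable.aestronglyMeasurable (by fun_prop)) (Eventually.of_forall fun x => ?_)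
  rw [Real.norm_eq_abs]
  exact (abs_sub _ _).trans (by linarith [hL_abs h0 x.1])

lemma atom_bound {L : ℝ} (h0 : 0 ≤ L) {A : G → ℝ} (hA : IsAtomG A) :
    |∫ x, A x * hL L x.1 ∂ρG| ≤ 4 := by
  obtain ⟨hi, R, hR, hout, hb, hz⟩ := hA
  obtain ⟨c, hc⟩ := cz_osc L hR
  have hpos : 0 < ρG R ∧ ρG R < ⊤ := by
    obtain ⟨z, l, r, hz, hl, hr, hR', -, -⟩ := hR
    exact cz_measure hz hl hr hR'
  have hRm : MeasurableSet R := by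
    obtain ⟨z, l, r, hz, hl, hr, rfl, -, -⟩ := hR
    exact measurableSet_Icc.prod (measurableSet_Icc.prod measurableSet_Icc)
  have e : ∫ x, A x * hL L x.1 ∂ρG = ∫ x, A x * (hL L x.1 - c) ∂ρG := by
    have h1 := integrable_mul_g h0 hi 0
    simp only [sub_zero] at h1
    simp_rw [mul_sub]
    rw [integral_sub h1 (hi.mul_const c), integral_mul_const, hz]
    simp
  rw [e]
  rw [eLpNorm_exponent_top] at hb
  have hA := ae_le_eLpNormEssSup (f := A) (μ := ρG)
  have hl : ∫⁻ x, ‖A x * (hL L x.1 - c)‖ₑ ∂ρG ≤ 4 := by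
    calc ∫⁻ x, ‖A x * (hL L x.1 - c)‖ₑ ∂ρG
        ≤ ∫⁻ x, R.indicator (fun x => (ρG R)⁻¹ * ENNReal.ofReal |hL L x.1 - c|) x ∂ρG := by
          apply lintegral_mono_ae
          filter_upwards [hA] with x hx
          by_cases hxR : x ∈ R
          · rw [indicator_of_mem hxR, enorm_mul, Real.enorm_eq_ofReal_abs (hL L x.1 - c)]
            gcongr
            exact hx.trans hb
          · rw [indicator_of_notMem hxR, hout x hxR]; simp
      _ = (ρG R)⁻¹ * ∫⁻ x in R, ENNReal.ofReal |hL L x.1 - c| ∂ρG := by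
          rw [lintegral_indicator hRm, lintegral_const_mul']
          exact ENNReal.inv_ne_top.2 hpos.1.ne'
      _ ≤ (ρG R)⁻¹ * (4 * ρG R) := by gcongr
      _ = 4 := by
          rw [mul_comm 4, ← mul_assoc, ENNReal.inv_mul_cancel hpos.1.ne' hpos.2.ne, one_mul]
  have h3 := enorm_integral_le_lintegral_enorm (μ := ρG) (fun x => A x * (hL L x.1 - c))
  have h4 := h3.trans hl
  rw [Real.enorm_eq_ofReal_abs] at h4
  have h5 : ENNReal.ofReal |∫ x, A x * (hL L x.1 - c) ∂ρG| ≤ ENNReal.ofReal 4 := by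
    simpa using h4
  exact (ENNReal.ofReal_le_ofReal_iff (by norm_num)).1 h5

lemma duality {L : ℝ} (h0 : 0 ≤ L) {f : G → ℝ} (hf : Integrable f ρG) {lam : ℕ → ℝ}
    {A : ℕ → G → ℝ} (hd : IsH1Decomp f lam A) :
    ∫ x, f x * hL L x.1 ∂ρG ≤ 4 * ∑' j, |lam j| := by
  obtain ⟨hA, hs, ht⟩ := hd
  set K := log (1 + L) with hK
  have hK0 : 0 ≤ K := Real.log_nonneg (by linarith)
  have hint : ∀ {u : G → ℝ}, Integrable u ρG → Integrable (fun x => u x * hL L x.1) ρG := by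
    intro u hu
    simpa using integrable_mul_g h0 hu 0
  have hSi : ∀ N : ℕ, Integrable (fun x => ∑ j ∈ Finset.range N, lam j * A j x) ρG := by
    intro N
    exact integrable_finsetSum _ fun j _ => (hA j).1.const_mul _
  have bound : ∀ N : ℕ, ∫ x, f x * hL L x.1 ∂ρG ≤
      K * (eLpNorm (fun x => f x - ∑ j ∈ Finset.range N, lam j * A j x) 1 ρG).toReal +
        4 * ∑' j, |lam j| := by
    intro N
    have hdi : Integrable (fun x => f x - ∑ j ∈ Finset.range N, lam j * A j x) ρG := hf.sub (hSi N)
    have e1 : ∫ x, f x * hL L x.1 ∂ρG =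
        ∫ x, (f x - ∑ j ∈ Finset.range N, lam j * A j x) * hL L x.1 ∂ρG +
        ∑ j ∈ Finset.range N, lam j * ∫ x, A j x * hL L x.1 ∂ρG := by
      have : ∑ j ∈ Finset.range N, lam j * ∫ x, A j x * hL L x.1 ∂ρG =
          ∫ x, (∑ j ∈ Finset.range N, lam j * A j x) * hL L x.1 ∂ρG := by
        simp_rw [Finset.sum_mul, mul_assoc]
        rw [integral_finsetSum _ fun j _ => (hint (hA j).1).const_mul _]
        simp_rw [integral_const_mul]
      rw [this, ← integral_add (hint hdi) (hint (hSi N))]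
      congr 1; ext x; ring
    rw [e1]
    have b1 : ∫ x, (f x - ∑ j ∈ Finset.range N, lam j * A j x) * hL L x.1 ∂ρG ≤
        K * (eLpNorm (fun x => f x - ∑ j ∈ Finset.range N, lam j * A j x) 1 ρG).toReal := by
      rw [eLpNorm_one_eq_lintegral_enorm, ← integral_norm_eq_lintegral_enorm hdi.1,
        ← integral_const_mul]
      apply integral_mono (hint hdi) (hdi.norm.const_mul K)
      intro x
      simp only
      refine (le_abs_self _).trans ?_
      rw [abs_mul, mul_comm, Real.norm_eq_abs]
      gcongr
      exact hL_abs h0 _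
    have b2 : ∑ j ∈ Finset.range N, lam j * ∫ x, A j x * hL L x.1 ∂ρG ≤ 4 * ∑' j, |lam j| := by
      calc _ ≤ ∑ j ∈ Finset.range N, |lam j| * 4 := by
            apply Finset.sum_le_sum
            intro j _
            refine (le_abs_self _).trans ?_
            rw [abs_mul]
            gcongr
            exact atom_bound h0 (hA j)
        _ = 4 * ∑ j ∈ Finset.range N, |lam j| := by rw [← Finset.sum_mul, mul_comm]
        _ ≤ _ := by
            gcongr
            exact hs.sum_le_tsum _ fun j _ => abs_nonneg _
    linarith
  have htr : Tendsto (fun N : ℕ => K * (eLpNorm (fun x => f x - ∑ j ∈ Finset.range N, lam j * A j x)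
      1 ρG).toReal + 4 * ∑' j, |lam j|) atTop (nhds (K * 0 + 4 * ∑' j, |lam j|)) := by
    refine Tendsto.add_const _ (Tendsto.const_mul _ ?_)
    have := (ENNReal.tendsto_toReal ENNReal.zero_ne_top).comp ht
    rw [ENNReal.toReal_zero] at this
    exact this
  have := ge_of_tendsto' htr bound
  simpa using this

lemma rho_R0 : 0 < ρG R0set ∧ ρG R0set < ⊤ := by
  apply cz_measure (c := (0, 0, 1)) (l := 2) (r := 1) (by norm_num) (by norm_num) (by norm_num)
  simp [R0set]

lemma rho_RL (L : ℝ) : ρG (RLset L) = ρG R0set := by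
  unfold RLset R0set
  rw [rhoG_prod, rhoG_prod, Real.volume_Icc, Real.volume_Icc]
  congr 2
  ring

lemma integrable_ind_R0 (c : ℝ) : Integrable (R0set.indicator (fun _ => c)) ρG :=
  (integrable_indicator_iff measurableSet_R0).2 (integrableOn_const (rho_R0.2.ne))

lemma integrable_ind_RL (L c : ℝ) : Integrable ((RLset L).indicator (fun _ => c)) ρG :=
  (integrable_indicator_iff (measurableSet_RL L)).2
    (integrableOn_const (by rw [rho_RL]; exact rho_R0.2.ne))

lemma integrable_fL (L : ℝ) : Integrable (fL L) ρG :=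
  (integrable_ind_RL L 1).sub (integrable_ind_R0 1)

lemma int_fL (L : ℝ) : ∫ x, fL L x ∂ρG = 0 := by
  unfold fL
  rw [integral_sub (integrable_ind_RL L 1) (integrable_ind_R0 1),
    integral_indicator_const _ (measurableSet_RL L), integral_indicator_const _ measurableSet_R0]
  simp [Measure.real, rho_RL]

lemma pair_lower {L : ℝ} (h : 2 < L) :
    (ρG R0set).toReal * (log L - log 2) ≤ ∫ x, fL L x * hL L x.1 ∂ρG := by
  have e : (ρG R0set).toReal * (log L - log 2) =
      ∫ x, ((RLset L).indicator (fun _ => log L) x - R0set.indicator (fun _ => log 2) x) ∂ρG := by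
    rw [integral_sub (integrable_ind_RL L _) (integrable_ind_R0 _),
      integral_indicator_const _ (measurableSet_RL L), integral_indicator_const _ measurableSet_R0]
    simp [Measure.real, rho_RL]; ring
  rw [e]
  have hi := integrable_mul_g (L := L) (by linarith) (integrable_fL L) 0
  simp only [sub_zero] at hi
  apply integral_mono ((integrable_ind_RL L _).sub (integrable_ind_R0 _)) hi
  intro x
  simp only [fL]
  rw [sub_mul]
  apply sub_le_sub
  · by_cases hx : x ∈ RLset L
    · rw [indicator_of_mem hx, indicator_of_mem hx, one_mul]
      have h1 : L - 1 ≤ x.1 := hx.1.1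
      have h2 := le_abs_self x.1
      exact le_min (Real.log_le_log (by linarith) (by linarith))
        (Real.log_le_log (by linarith) (by linarith))
    · rw [indicator_of_notMem hx, indicator_of_notMem hx, zero_mul]
  · by_cases hx : x ∈ R0set
    · rw [indicator_of_mem hx, indicator_of_mem hx, one_mul]
      have h1 : |x.1| ≤ 1 := abs_le.2 hx.1
      exact (min_le_left _ _).trans (Real.log_le_log (by positivity) (by linarith))
    · rw [indicator_of_notMem hx, indicator_of_notMem hx, zero_mul]

lemma exists_decomp {L : ℝ} (h : 2 < L) : ∃ lam A, IsH1Decomp (fL L) lam A := by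
  set r := log (L + 100) with hr
  have hr1 : 1 ≤ r := by
    rw [hr, Real.le_log_iff_exp_le (by linarith)]
    linarith [exp_one_le]
  have her : exp r = L + 100 := Real.exp_log (by linarith)
  set l := exp (2 * r) with hl
  have hle : l = (L + 100) ^ 2 := by
    rw [hl, ← her, ← Real.exp_nat_mul]; norm_num
  have hl0 : 0 < l := Real.exp_pos _
  set R : Set G := Set.Icc (L/2 - l/2) (L/2 + l/2) ×ˢ
        (Set.Icc (0 - l/2) (0 + l/2) ×ˢ
         Set.Icc (1 * Real.exp (-r)) (1 * Real.exp r)) with hR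
  have hcz : IsCZ R := by
    refine ⟨(L/2, 0, 1), l, r, one_pos, hl0, by linarith, rfl, ?_, ?_⟩
    · intro h'; linarith
    · intro _
      simp only [one_mul]
      refine ⟨le_rfl, ?_⟩
      rw [hl]
      apply Real.exp_lt_exp.2
      linarith
  have hm : 0 < ρG R ∧ ρG R < ⊤ :=
    cz_measure (c := (L/2, 0, 1)) one_pos hl0 (by linarith) rfl
  have hbig : L + 2 ≤ l := by rw [hle]; nlinarith
  have E1 : exp (-r) ≤ exp (-1) := Real.exp_le_exp.2 (by linarith)
  have E2 : exp 1 ≤ exp r := Real.exp_le_exp.2 (by linarith)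
  have hsub1 : RLset L ⊆ R := by
    rintro ⟨a, b, s⟩ ⟨⟨h1, h2⟩, ⟨h3, h4⟩, h5, h6⟩
    simp only at h1 h2 h3 h4 h5 h6
    refine ⟨⟨?_, ?_⟩, ⟨?_, ?_⟩, ?_, ?_⟩ <;> simp only <;> linarith
  have hsub2 : R0set ⊆ R := by
    rintro ⟨a, b, s⟩ ⟨⟨h1, h2⟩, ⟨h3, h4⟩, h5, h6⟩
    simp only at h1 h2 h3 h4 h5 h6
    refine ⟨⟨?_, ?_⟩, ⟨?_, ?_⟩, ?_, ?_⟩ <;> simp only <;> linarith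
  set M := (ρG R).toReal with hM
  have hM0 : 0 < M := ENNReal.toReal_pos hm.1.ne' hm.2.ne
  have hatom : IsAtomG (fun x => M⁻¹ * fL L x) := by
    refine ⟨(integrable_fL L).const_mul _, R, hcz, ?_, ?_, ?_⟩
    · intro x hx
      simp only [fL]
      rw [indicator_of_notMem (fun h' => hx (hsub1 h')),
        indicator_of_notMem (fun h' => hx (hsub2 h'))]
      simp
    · rw [eLpNorm_exponent_top]
      have : (ρG R)⁻¹ = ENNReal.ofReal M⁻¹ := by
        rw [ENNReal.ofReal_inv_of_pos hM0, hM, ENNReal.ofReal_toReal hm.2.ne]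
      rw [this]
      apply eLpNormEssSup_le_of_ae_bound
      refine Eventually.of_forall fun x => ?_
      rw [norm_mul, Real.norm_of_nonneg (by positivity)]
      have : ‖fL L x‖ ≤ 1 := by
        rw [Real.norm_eq_abs]
        simp only [fL]
        by_cases h1 : x ∈ RLset L <;> by_cases h2 : x ∈ R0set <;> simp [h1, h2]
      exact mul_le_of_le_one_right (by positivity) this
    · rw [integral_const_mul, int_fL, mul_zero]
  refine ⟨fun j => if j = 0 then M else 0, fun _ x => M⁻¹ * fL L x, fun _ => hatom, ?_, ?_⟩
  · apply summable_of_ne_finset_zero (s := {0})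
    intro j hj
    simp only [Finset.mem_singleton] at hj
    simp [hj]
  · apply tendsto_const_nhds.congr'
    filter_upwards [eventually_ge_atTop 1] with N hN
    have : (fun x => fL L x - ∑ j ∈ Finset.range N, (if j = 0 then M else 0) * (M⁻¹ * fL L x)) =
        fun _ => 0 := by
      ext x
      rw [← Finset.sum_mul, Finset.sum_ite_eq', if_pos (by simpa using (by omega : 0 < N)),
        ← mul_assoc, mul_inv_cancel₀ hM0.ne', one_mul, sub_self]
    rw [this]
    simp

lemma H1_lower {L : ℝ} (h : 2 < L) :
    (ρG R0set).toReal / 4 * (log L - log 2) ≤ H1norm (fL L) := by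
  unfold H1norm
  apply le_csInf
  · obtain ⟨lam, A, hd⟩ := exists_decomp h
    exact ⟨_, lam, A, hd, rfl⟩
  · rintro s ⟨lam, A, hd, rfl⟩
    have h1 := duality (L := L) (by linarith) (integrable_fL L) hd
    have h2 := pair_lower h
    linarith

lemma ratio_lower : ∃ c > 0, ∀ L : ℝ, 10 ^ 6 ≤ L →
    0 < (∫⁻ x, maxHeat (fL L) x ∂ρG).toReal ∧
    c * √(log L) ≤ H1norm (fL L) / (∫⁻ x, maxHeat (fL L) x ∂ρG).toReal := by
  obtain ⟨C, hC, hu⟩ := mf_upper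
  have hM : 0 < (ρG R0set).toReal := ENNReal.toReal_pos rho_R0.1.ne' rho_R0.2.ne
  set M := (ρG R0set).toReal with hMd
  refine ⟨M / 8 / (C * 2), by positivity, fun L hL => ?_⟩
  have hL0 : 0 < L := by linarith
  have h1 := hu L hL
  have h2 := mf_pos (L := L) (by linarith)
  have hpos : 0 < (∫⁻ x, maxHeat (fL L) x ∂ρG).toReal :=
    ENNReal.toReal_pos h2.ne' (h1.trans_lt ENNReal.ofReal_lt_top).ne
  refine ⟨hpos, ?_⟩
  have hV := V_ge (10 ^ 5 * L)
  have h3 : (∫⁻ x, maxHeat (fL L) x ∂ρG).toReal ≤ C * √(V (10 ^ 5 * L)) :=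
    ENNReal.toReal_le_of_le_ofReal (by positivity) h1
  have h4 := H1_lower (L := L) (by linarith)
  have l1 : 1 ≤ log L := log_big hL
  have l2 : 2 * log 2 ≤ log L := by
    rw [← Real.log_rpow (by norm_num)]
    apply Real.log_le_log (by norm_num)
    norm_num; linarith
  have lV : V (10 ^ 5 * L) ≤ 4 * log L := by
    unfold V
    rw [abs_of_pos (by positivity)]
    have : log (1 + 10 ^ 5 * L) ≤ log (L ^ 2) :=
      Real.log_le_log (by positivity) (by nlinarith)
    rw [Real.log_pow] at this
    push_cast at this
    linarith
  have hs : √(V (10 ^ 5 * L)) ≤ 2 * √(log L) := by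
    apply Real.sqrt_le_iff.2 ⟨by positivity, ?_⟩
    rw [mul_pow, Real.sq_sqrt (by linarith)]
    linarith
  have h5 : (∫⁻ x, maxHeat (fL L) x ∂ρG).toReal ≤ C * (2 * √(log L)) := h3.trans (by gcongr)
  rw [le_div_iff₀ hpos]
  have hq : √(log L) * √(log L) = log L := Real.mul_self_sqrt (by linarith)
  calc M / 8 / (C * 2) * √(log L) * (∫⁻ x, maxHeat (fL L) x ∂ρG).toReal
      ≤ M / 8 / (C * 2) * √(log L) * (C * (2 * √(log L))) := by gcongr
    _ = M / 8 * (√(log L) * √(log L)) := by field_simp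
    _ = M / 4 * (log L / 2) := by rw [hq]; ring
    _ ≤ M / 4 * (log L - log 2) := by gcongr; linarith
    _ ≤ _ := h4

theorem no_converse_inequality :
    Tendsto (fun L : ℝ => H1norm (fL L) / (∫⁻ x, maxHeat (fL L) x ∂ρG).toReal)
      atTop atTop ∧
    ¬ ∃ C : ℝ, ∀ f : G → ℝ, MemH1 f →
        H1norm f ≤ C * (∫⁻ x, maxHeat f x ∂ρG).toReal := by
  obtain ⟨c, hc, h⟩ := ratio_lower
  have ht : Tendsto (fun L : ℝ => H1norm (fL L) / (∫⁻ x, maxHeat (fL L) x ∂ρG).toReal)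
      atTop atTop := by
    apply tendsto_atTop_mono' atTop (f₁ := fun L : ℝ => c * √(log L))
    · filter_upwards [eventually_ge_atTop (10 ^ 6)] with L hL
      exact (h L hL).2
    · exact (Real.tendsto_sqrt_atTop.comp Real.tendsto_log_atTop).const_mul_atTop hc
  refine ⟨ht, ?_⟩
  rintro ⟨C, hC⟩
  obtain ⟨L, h1, h2⟩ := ((ht.eventually_gt_atTop C).and (eventually_ge_atTop (10 ^ 6))).exists
  have h3 := (h L h2).1
  rw [lt_div_iff₀ h3] at h1
  exact absurd (hC (fL L) ⟨integrable_fL L, exists_decomp (by linarith)⟩) (not_le.2 h1)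
end
end

section
/- The function g(x₁,x₂,a) = log|x₁| on G satisfies ‖g‖_{BMO} = ‖h‖_{BMO(ℝ)}, where h(s) = log|s| and ‖h‖_{BMO(ℝ)} = sup over bounded intervals Q ⊂ ℝ of |Q|⁻¹∫_Q |h − h_Q| ds (h_Q being the mean of h over Q); in particular ‖g‖_{BMO} < ∞. -/
open MeasureTheory Real Filter Set
open scoped ENNReal

noncomputable section

lemma key_map (I : Set ℝ) (hI : MeasurableSet I) (J K : Set ℝ) (hJ : MeasurableSet J)
    (hK : MeasurableSet K) :
    Measure.map Prod.fst (ρG.restrict (I ×ˢ (J ×ˢ K))) =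
      (∫⁻ y in J ×ˢ K, ENNReal.ofReal (if 0 < y.2 then y.2⁻¹ else 0)) •
        (volume.restrict I : Measure ℝ) := by
  have hm : Measurable fun y : ℝ × ℝ => ENNReal.ofReal (if 0 < y.2 then y.2⁻¹ else 0) := by
    apply ENNReal.measurable_ofReal.comp
    exact Measurable.ite (measurableSet_lt measurable_const measurable_snd)
      measurable_snd.inv measurable_const
  have hm2 : Measurable fun x : G => ENNReal.ofReal (if 0 < x.2.2 then x.2.2⁻¹ else 0) :=
    hm.comp measurable_snd
  ext s hs
  have h1 : (Prod.fst : G → ℝ) ⁻¹' s ∩ (I ×ˢ (J ×ˢ K)) = (s ∩ I) ×ˢ (J ×ˢ K) := by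
    ext x; simp [and_assoc]
  rw [Measure.map_apply measurable_fst hs, Measure.restrict_apply (measurable_fst hs), h1, ρG,
    withDensity_apply _ ((hs.inter hI).prod (hJ.prod hK)), Measure.volume_eq_prod,
    ← Measure.prod_restrict]
  rw [lintegral_prod _ hm2.aemeasurable]
  simp only [lintegral_const, Measure.smul_apply, smul_eq_mul, Measure.restrict_apply hs,
    Measure.restrict_apply MeasurableSet.univ, univ_inter]

lemma key_const (p q u v : ℝ) (hpq : p < q) (hu : 0 < u) (huv : u < v) :
    (∫⁻ y in Icc p q ×ˢ Icc u v, ENNReal.ofReal (if 0 < y.2 then y.2⁻¹ else 0)) ≠ 0 ∧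
    (∫⁻ y in Icc p q ×ˢ Icc u v, ENNReal.ofReal (if 0 < y.2 then y.2⁻¹ else 0)) ≠ ⊤ := by
  have hms : MeasurableSet (Icc p q ×ˢ Icc u v) := measurableSet_Icc.prod measurableSet_Icc
  have hvol : (volume : Measure (ℝ × ℝ)) (Icc p q ×ˢ Icc u v) =
      ENNReal.ofReal (q - p) * ENNReal.ofReal (v - u) := by
    rw [Measure.volume_eq_prod, Measure.prod_prod, Real.volume_Icc, Real.volume_Icc]
  constructor
  · have h : (∫⁻ _y in Icc p q ×ˢ Icc u v, ENNReal.ofReal v⁻¹) ≤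
        ∫⁻ y in Icc p q ×ˢ Icc u v, ENNReal.ofReal (if 0 < y.2 then y.2⁻¹ else 0) := by
      apply setLIntegral_mono' hms
      rintro ⟨y, z⟩ ⟨-, hz1, hz2⟩
      simp only at hz1 hz2 ⊢
      have : 0 < z := by linarith
      rw [if_pos this]
      gcongr
    rw [setLIntegral_const, hvol] at h
    intro h0
    rw [h0] at h
    have : 0 < v⁻¹ := inv_pos.2 (hu.trans huv)
    have hh : 0 < ENNReal.ofReal v⁻¹ * (ENNReal.ofReal (q - p) * ENNReal.ofReal (v - u)) := by
      apply ENNReal.mul_pos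
      · simpa using this
      · simp [hpq, huv]
    exact absurd h (not_le.2 hh)
  · have h : (∫⁻ y in Icc p q ×ˢ Icc u v, ENNReal.ofReal (if 0 < y.2 then y.2⁻¹ else 0)) ≤
        ∫⁻ _y in Icc p q ×ˢ Icc u v, ENNReal.ofReal u⁻¹ := by
      apply setLIntegral_mono' hms
      rintro ⟨y, z⟩ ⟨-, hz1, hz2⟩
      simp only at hz1 hz2 ⊢
      have : 0 < z := by linarith
      rw [if_pos this]
      gcongr
    rw [setLIntegral_const, hvol] at h
    refine ne_top_of_le_ne_top ?_ h
    finiteness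

lemma key_eq (h : ℝ → ℝ) (hh : Measurable h) (a b p q u v : ℝ) (hab : a < b) (hpq : p < q)
    (hu : 0 < u) (huv : u < v) :
    (ρG (Icc a b ×ˢ (Icc p q ×ˢ Icc u v)))⁻¹ *
      ∫⁻ x in Icc a b ×ˢ (Icc p q ×ˢ Icc u v),
        ENNReal.ofReal |h x.1 - czMean (fun x : G => h x.1) (Icc a b ×ˢ (Icc p q ×ˢ Icc u v))| ∂ρG
    = (ENNReal.ofReal (b - a))⁻¹ *
      ∫⁻ s in Set.Icc a b, ENNReal.ofReal |h s - (∫ t in Set.Icc a b, h t) / (b - a)| := by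
  obtain ⟨hC0, hCt⟩ := key_const p q u v hpq hu huv
  have hmap := key_map (Icc a b) measurableSet_Icc (Icc p q) (Icc u v) measurableSet_Icc
    measurableSet_Icc
  set C := ∫⁻ y in Icc p q ×ˢ Icc u v, ENNReal.ofReal (if 0 < y.2 then y.2⁻¹ else 0) with hC
  set R : Set G := Icc a b ×ˢ (Icc p q ×ˢ Icc u v) with hR
  have hρ : ρG R = C * ENNReal.ofReal (b - a) := by
    have := congrArg (fun m : Measure ℝ => m univ) hmap
    simpa [Measure.map_apply measurable_fst MeasurableSet.univ] using this
  have hmean : czMean (fun x : G => h x.1) R = (∫ t in Set.Icc a b, h t) / (b - a) := by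
    have h1 : ∫ x in R, h x.1 ∂ρG = C.toReal * ∫ t in Icc a b, h t := by
      have := integral_map (μ := ρG.restrict R) (φ := Prod.fst) measurable_fst.aemeasurable
        (f := h) hh.aestronglyMeasurable
      rw [← this, hmap, integral_smul_measure, smul_eq_mul]
    have hCr : C.toReal ≠ 0 := ENNReal.toReal_ne_zero.2 ⟨hC0, hCt⟩
    rw [czMean, h1, hρ, ENNReal.toReal_mul, ENNReal.toReal_ofReal (by linarith),
      mul_div_mul_left _ _ hCr]
  rw [hmean]
  have h2 := lintegral_map (μ := ρG.restrict R) (g := Prod.fst)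
    (f := fun s => ENNReal.ofReal |h s - (∫ t in Set.Icc a b, h t) / (b - a)|)
    (by fun_prop) measurable_fst
  rw [← h2, hmap, lintegral_smul_measure, hρ, smul_eq_mul,
    ENNReal.mul_inv (Or.inl hC0) (Or.inl hCt)]
  rw [mul_comm C⁻¹, mul_assoc, ← mul_assoc C⁻¹, ENNReal.inv_mul_cancel hC0 hCt, one_mul]

lemma cz_eq_line (h : ℝ → ℝ) (hh : Measurable h) :
    czBMO (fun x : G => h x.1) = lineBMO h := by
  apply le_antisymm
  · refine iSup₂_le ?_
    rintro R ⟨c, L, r, hc, hL, hr, rfl, -, -⟩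
    rw [key_eq h hh _ _ _ _ _ _ (by linarith) (by linarith) (by positivity)
      (by gcongr; linarith)]
    exact le_iSup₂_of_le (c.1 - L/2) (c.1 + L/2) (le_iSup_of_le (by linarith) le_rfl)
  · refine iSup₂_le fun a b => iSup_le fun hab => ?_
    have hL : 0 < b - a := by linarith
    have hu : 0 < (b - a) * exp (-2) * exp (-1) := by positivity
    have huv : (b - a) * exp (-2) * exp (-1) < (b - a) * exp (-2) * exp 1 := by
      gcongr; norm_num
    rw [← key_eq h hh a b a b _ _ hab hab hu huv]
    refine le_iSup₂_of_le _ ?_ le_rfl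
    refine ⟨((a+b)/2, (a+b)/2, (b - a) * exp (-2)), b - a, 1, by positivity, hL, one_pos, ?_, ?_, ?_⟩
    · have e1 : (a+b)/2 - (b-a)/2 = a := by ring
      have e2 : (a+b)/2 + (b-a)/2 = b := by ring
      simp only [e1, e2]
    · intro h; exact absurd h (lt_irrefl _)
    · intro _
      simp only
      rw [mul_assoc, ← exp_add, mul_assoc, ← exp_add]
      constructor
      · norm_num
      · have : (1:ℝ) < exp (-2 + 8 * 1) := by rw [Real.one_lt_exp_iff]; norm_num
        nlinarith

lemma aux_pos (M s : ℝ) (hM : 0 < M) (hs : 0 < s) : s * (log M - log s) ≤ M - s := by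
  rw [← Real.log_div hM.ne' hs.ne']
  have := Real.log_le_sub_one_of_pos (div_pos hM hs)
  calc s * log (M / s) ≤ s * (M / s - 1) := by gcongr
    _ = M - s := by field_simp

lemma aux_neg (M s : ℝ) (hs : s ≤ 0) (hsM : |s| ≤ M) : s * (log M - log s) ≤ 0 := by
  rcases hs.eq_or_lt with rfl | hs
  · simp
  · rw [← Real.log_abs s]
    have := Real.log_le_log (abs_pos.2 hs.ne) hsM
    nlinarith

lemma aux_ineq (a b : ℝ) (hab : a < b) :
    (b - a) * log (max |a| |b|) - (b * log b - a * log a - b + a) ≤ 2 * (b - a) := by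
  rcases le_total |a| |b| with h | h
  · rw [max_eq_right h]
    have hb : 0 < b := by
      by_contra hb
      rw [abs_of_nonpos (by linarith : a ≤ 0), abs_of_nonpos (by linarith : b ≤ 0)] at h
      linarith
    rw [abs_of_pos hb] at h ⊢
    rcases le_total 0 a with ha | ha
    · have := aux_neg b (-a) (by linarith) (by rwa [abs_neg])
      rw [Real.log_neg_eq_log] at this
      nlinarith
    · rcases ha.eq_or_lt with rfl | ha
      · simp; linarith
      have := aux_pos b (-a) hb (by linarith)
      rw [Real.log_neg_eq_log] at this
      nlinarith
  · rw [max_eq_left h, Real.log_abs]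
    have ha : a < 0 := by
      by_contra ha
      rw [abs_of_nonneg (by linarith : 0 ≤ a), abs_of_nonneg (by linarith : 0 ≤ b)] at h
      linarith
    rw [abs_of_neg ha] at h
    rcases le_or_gt b 0 with hb | hb
    · have := aux_neg (-a) b hb h
      rw [Real.log_neg_eq_log] at this
      nlinarith
    · have := aux_pos (-a) b (by linarith) hb
      rw [Real.log_neg_eq_log] at this
      nlinarith

lemma line_bound (a b : ℝ) (hab : a < b) :
    ∫ s in Icc a b, |log |s| - (∫ t in Icc a b, log |t|) / (b - a)| ≤ 4 * (b - a) := by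
  have hL : 0 < b - a := by linarith
  simp only [Real.log_abs]
  have hint : IntegrableOn log (Icc a b) := by
    rw [integrableOn_Icc_iff_integrableOn_Ioc, ← intervalIntegrable_iff_integrableOn_Ioc_of_le hab.le]
    exact intervalIntegral.intervalIntegrable_log'
  have hc : ∀ c : ℝ, IntegrableOn (fun _ => c) (Icc a b) := fun c => by simp
  have hci : ∀ c : ℝ, ∫ _ in Icc a b, c = (b - a) * c := fun c => by
    simp [hab.le]
  have hval : ∫ t in Icc a b, log t = b * log b - a * log a - b + a := by
    rw [integral_Icc_eq_integral_Ioc, ← intervalIntegral.integral_of_le hab.le, integral_log]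
  set I := ∫ t in Icc a b, log t with hI
  set M := max |a| |b| with hM
  have hineq : (b - a) * log M - I ≤ 2 * (b - a) := hval ▸ aux_ineq a b hab
  have hae : ∀ᵐ s ∂(volume.restrict (Icc a b)),
      |log s - I / (b - a)| ≤ (log M - log s) + 2 := by
    have h0 : ∀ᵐ s : ℝ ∂(volume.restrict (Icc a b)), s ≠ 0 :=
      ae_restrict_of_ae (Measure.ae_ne volume 0)
    have h1 : ∀ᵐ s : ℝ ∂(volume.restrict (Icc a b)), log s ≤ log M := by
      filter_upwards [h0, ae_restrict_mem measurableSet_Icc] with s hs hs2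
      rw [← Real.log_abs s]
      exact Real.log_le_log (abs_pos.2 hs) (abs_le_max_abs_abs hs2.1 hs2.2)
    have h2 : I ≤ (b - a) * log M := by
      rw [← hci]
      exact integral_mono_ae hint (hc _) h1
    have h3 : I / (b - a) ≤ log M := by rw [div_le_iff₀ hL]; linarith
    have h4 : log M - 2 ≤ I / (b - a) := by rw [le_div_iff₀ hL]; linarith
    filter_upwards [h1] with s hs
    rw [abs_le]; constructor <;> linarith
  calc _ ≤ ∫ s in Icc a b, ((log M - log s) + 2) :=
        integral_mono_ae ((hint.sub (hc _)).abs) (((hc _).sub hint).add (hc _)) hae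
    _ = ((b - a) * log M - I) + (b - a) * 2 := by
        have e1 : IntegrableOn (fun s => log M - log s) (Icc a b) := (hc _).sub hint
        rw [integral_add e1 (hc _), integral_sub (hc _) hint, hci, hci]
    _ ≤ _ := by linarith

lemma line_fin : lineBMO (fun s : ℝ => Real.log |s|) < ⊤ := by
  refine lt_of_le_of_lt (b := 4) ?_ (by finiteness)
  refine iSup₂_le fun a b => iSup_le fun hab => ?_
  have hL : 0 < b - a := by linarith
  have hint : IntegrableOn (fun s => log |s|) (Icc a b) := by
    simp only [Real.log_abs]
    rw [integrableOn_Icc_iff_integrableOn_Ioc, ← intervalIntegrable_iff_integrableOn_Ioc_of_le hab.le]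
    exact intervalIntegral.intervalIntegrable_log'
  have hc : ∀ c : ℝ, IntegrableOn (fun _ => c) (Icc a b) := fun c => by simp
  have e1 : IntegrableOn
      (fun s => |log |s| - (∫ t in Icc a b, log |t|) / (b - a)|) (Icc a b) :=
    (hint.sub (hc _)).abs
  rw [← ofReal_integral_eq_lintegral_ofReal e1
    (Filter.Eventually.of_forall fun _ => abs_nonneg _), ← ENNReal.div_eq_inv_mul]
  apply ENNReal.div_le_of_le_mul
  refine (ENNReal.ofReal_le_ofReal (line_bound a b hab)).trans ?_
  rw [ENNReal.ofReal_mul (by norm_num)]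
  simp

theorem log_abs_BMO :
    czBMO (fun x : G => Real.log |x.1|) = lineBMO (fun s : ℝ => Real.log |s|) ∧
    czBMO (fun x : G => Real.log |x.1|) < ⊤ := by
  have h := cz_eq_line (fun s : ℝ => Real.log |s|)
    (Real.measurable_log.comp continuous_abs.measurable)
  exact ⟨h, h ▸ line_fin⟩
end
end

section
/- Let R₀ = [−1,1]×[−1,1]×[e⁻¹,e] and 2R₀ = [−2,2]×[−2,2]×[e⁻²,e²]. There exists a constant C > 0 such that for every x ∈ G with x ∉ 2R₀, the heat maximal function of χ_{R₀} satisfies M χ_{R₀}(x) ≤ C δ(x)^{1/2} / (r(x)² sinh r(x)). -/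
open MeasureTheory Real Filter Set
open scoped ENNReal

noncomputable section

lemma aux_one_le (a s : ℝ) (ha : 0 < a) (hs : 0 ≤ s) : 1 ≤ (a + a⁻¹ + a⁻¹ * s) / 2 := by
  have h1 : a * a⁻¹ = 1 := mul_inv_cancel₀ ha.ne'
  have h2 : 0 < a⁻¹ := inv_pos.2 ha
  have h3 : 0 ≤ a⁻¹ * s := by positivity
  nlinarith [sq_nonneg (a - a⁻¹), sq_nonneg (a + a⁻¹ - 2)]

lemma one_le_coshArg_s15 (x : G) (hx : 0 < x.2.2) : 1 ≤ coshArg x :=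
  aux_one_le _ _ hx (by positivity)

lemma cosh_rG_s15 (x : G) (hx : 0 < x.2.2) : Real.cosh (rG x) = coshArg x :=
  Real.cosh_arcosh (one_le_coshArg_s15 x hx)

lemma rG_nonneg_s15 (x : G) (hx : 0 < x.2.2) : 0 ≤ rG x :=
  Real.arcosh_nonneg (one_le_coshArg_s15 x hx)

/-- Elementary bound for the supremum over time. -/
lemma time_bound (t r : ℝ) (ht : 0 < t) (hr : 0 < r) :
    t ^ (-(3 : ℝ)/2) * Real.exp (-(r ^ 2) / (4 * t)) ≤ 24 / r ^ 3 := by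
  have hs : 0 < Real.sqrt t := Real.sqrt_pos.2 ht
  have h1 : t ^ (-(3 : ℝ)/2) = (Real.sqrt t ^ 3)⁻¹ := by
    rw [Real.sqrt_eq_rpow, ← Real.rpow_natCast, ← Real.rpow_mul ht.le, ← Real.rpow_neg ht.le]
    norm_num
  set s := Real.sqrt t with hsdef
  have hts : t = s ^ 2 := (Real.sq_sqrt ht.le).symm
  set u := r / s with hu
  have hupos : 0 < u := by positivity
  have h2 : -(r ^ 2) / (4 * t) = -(u ^ 2 / 4) := by
    rw [hts, hu]; field_simp
  have h3 := Real.quadratic_le_exp_of_nonneg (x := u ^ 2 / 4) (by positivity)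
  have h4 : u ^ 3 ≤ 24 * Real.exp (u ^ 2 / 4) := by
    nlinarith [mul_nonneg (sq_nonneg u) (sq_nonneg (u - 1)), sq_nonneg u,
      mul_nonneg (sq_nonneg u) (sq_nonneg u)]
  have hru : r = u * s := by rw [hu]; field_simp
  rw [h1, h2, Real.exp_neg, le_div_iff₀ (by positivity), hru]
  have he := Real.exp_pos (u ^ 2 / 4)
  have : (s ^ 3)⁻¹ * (Real.exp (u ^ 2 / 4))⁻¹ * (u * s) ^ 3 = u ^ 3 / Real.exp (u ^ 2 / 4) := by
    field_simp
  rw [this, div_le_iff₀ he]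
  exact h4

lemma heatK_bound (t : ℝ) (y : G) (ht : 0 < t) (hr : 0 < rG y) (hb : 0 < y.2.2) :
    |heatK t y| ≤ 24 * y.2.2⁻¹ / (rG y ^ 2 * Real.sinh (rG y)) := by
  have hsq : Real.sqrt (deltaG y) = y.2.2⁻¹ := by
    rw [deltaG, ← inv_pow]; exact Real.sqrt_sq (inv_nonneg.2 hb.le)
  have hsh : 0 < Real.sinh (rG y) := Real.sinh_pos_iff.2 hr
  have hpi : (8 * Real.pi ^ ((3 : ℝ)/2))⁻¹ ≤ 1 := by
    apply inv_le_one_of_one_le₀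
    have : 1 ≤ Real.pi ^ ((3 : ℝ)/2) :=
      Real.one_le_rpow (by linarith [Real.pi_gt_three]) (by norm_num)
    linarith
  have hpi0 : 0 ≤ (8 * Real.pi ^ ((3 : ℝ)/2))⁻¹ := by positivity
  have htb := time_bound t (rG y) ht hr
  have hb' : 0 < y.2.2⁻¹ := inv_pos.2 hb
  rw [heatK, if_neg hr.ne', hsq, abs_of_nonneg (by positivity)]
  calc (8 * Real.pi ^ ((3 : ℝ)/2))⁻¹ * y.2.2⁻¹ * (rG y / Real.sinh (rG y)) * t ^ (-(3 : ℝ)/2)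
        * Real.exp (-(rG y ^ 2) / (4 * t))
      = (8 * Real.pi ^ ((3 : ℝ)/2))⁻¹ * (y.2.2⁻¹ * (rG y / Real.sinh (rG y))
        * (t ^ (-(3 : ℝ)/2) * Real.exp (-(rG y ^ 2) / (4 * t)))) := by ring
    _ ≤ 1 * (y.2.2⁻¹ * (rG y / Real.sinh (rG y)) * (24 / rG y ^ 3)) := by
        gcongr
    _ = 24 * y.2.2⁻¹ / (rG y ^ 2 * Real.sinh (rG y)) := by
        field_simp

/-- The comparison of radii, from a comparison of the hyperbolic cosines. -/
lemma radius_compare (p q : ℝ) (hp : 0 ≤ p) (hq : 0 ≤ q)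
    (h1 : 55 / 54 ≤ Real.cosh q) (h2 : Real.cosh p ≤ 135 * Real.cosh q) :
    0 < q ∧ p ^ 2 * Real.sinh p ≤ (3721 * 810) * (q ^ 2 * Real.sinh q) := by
  have hq1 : 1 / 10 ≤ q := by
    by_contra hlt
    push Not at hlt
    have ha := Real.cosh_le_exp_half_sq q
    have hb : Real.exp (q ^ 2 / 2) ≤ Real.exp (1 / 200) :=
      Real.exp_le_exp.2 (by nlinarith)
    have hc : (1 : ℝ) - 1 / 200 ≤ Real.exp (-(1 / 200)) := by
      have := Real.add_one_le_exp (-(1 / 200 : ℝ)); linarith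
    have hd : Real.exp (1 / 200) * Real.exp (-(1 / 200)) = 1 := by
      rw [← Real.exp_add]; simp
    nlinarith [Real.exp_pos (1 / 200 : ℝ)]
  have hq0 : 0 < q := by linarith
  have hshq : 0 < Real.sinh q := Real.sinh_pos_iff.2 hq0
  have hshp : 0 ≤ Real.sinh p := Real.sinh_nonneg_iff.2 hp
  have hs1 : Real.cosh q ≤ 6 * Real.sinh q := by
    have := Real.cosh_sq q
    nlinarith
  have hs2 : Real.sinh p ≤ 810 * Real.sinh q := by
    have := (Real.sinh_lt_cosh p).le
    linarith
  have he : p ≤ q + 6 := by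
    rw [← Real.exp_le_exp, Real.exp_add]
    have h270 : (270 : ℝ) ≤ Real.exp 6 := by
      have h6 : Real.exp 6 = Real.exp 1 ^ 6 := by rw [← Real.exp_nat_mul]; norm_num
      have h27 : (2.7 : ℝ) ≤ Real.exp 1 := by linarith [Real.exp_one_gt_d9]
      have : (2.7 : ℝ) ^ 6 ≤ Real.exp 1 ^ 6 := by gcongr
      rw [h6]; norm_num at this ⊢; linarith
    have e1 := Real.cosh_eq p
    have e2 := Real.cosh_eq q
    have e3 : Real.exp (-q) ≤ Real.exp q := Real.exp_le_exp.2 (by linarith)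
    have e4 := Real.exp_pos (-p)
    have e5 := Real.exp_pos q
    nlinarith
  have he' : p ≤ 61 * q := by linarith
  refine ⟨hq0, ?_⟩
  calc p ^ 2 * Real.sinh p ≤ (61 * q) ^ 2 * (810 * Real.sinh q) := by gcongr
    _ = _ := by ring

set_option maxHeartbeats 2000000 in
/-- Geometry: the supports. -/
lemma geom (x y : G) (ha : 0 < x.2.2) (hx : x ∉ twoR0set) (hb : 0 < y.2.2)
    (hz : gMul x (gInv y) ∈ R0set) :
    55 / 54 ≤ coshArg y ∧ coshArg x ≤ 135 * coshArg y := by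
  obtain ⟨x1, x2, a⟩ := x
  obtain ⟨y1, y2, b⟩ := y
  simp only [gMul, gInv, R0set, twoR0set, coshArg, mem_prod, mem_Icc] at *
  have e1 : Real.exp 1 < 3 := Real.exp_one_lt_three
  have e2 : 2.7 < Real.exp 1 := by linarith [Real.exp_one_gt_d9]
  have e3 : Real.exp (-1) * Real.exp 1 = 1 := by rw [← Real.exp_add]; simp
  have e4 : Real.exp 2 = Real.exp 1 * Real.exp 1 := by rw [← Real.exp_add]; norm_num
  have e5 : Real.exp (-2) = Real.exp (-1) * Real.exp (-1) := by rw [← Real.exp_add]; norm_num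
  set E := Real.exp 1 with hE
  set F := Real.exp (-1) with hF
  have hF0 : 0 < F := Real.exp_pos _
  rw [e4, e5] at hx
  obtain ⟨⟨hz1, hz1'⟩, ⟨hz2, hz2'⟩, hc, hc'⟩ := hz
  have hbi : b * b⁻¹ = 1 := mul_inv_cancel₀ hb.ne'
  set c := a * (1 / b) with hcdef
  have hc0 : 0 < c := by positivity
  have hac : a = b * c := by rw [hcdef]; field_simp
  have hr1 : a * (-y1 / b) = -(c * y1) := by rw [hcdef]; ring
  have hr2 : a * (-y2 / b) = -(c * y2) := by rw [hcdef]; ring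
  rw [hr1] at hz1 hz1'
  rw [hr2] at hz2 hz2'
  have hF3 : 1 / 3 ≤ F := by nlinarith
  have hFh : F ≤ 1 / 2 := by nlinarith
  have hc3 : c ≤ 3 := by linarith
  have hc3' : 1 / 3 ≤ c := by linarith
  have hbp : 0 < b⁻¹ := inv_pos.2 hb
  have key : 2 + 1 / 27 ≤ b + b⁻¹ + b⁻¹ * (y1 ^ 2 + y2 ^ 2) := by
    have hnn : 0 ≤ b⁻¹ * (y1 ^ 2 + y2 ^ 2) := by positivity
    have hbb : b + b⁻¹ = 2 + (b - 1) ^ 2 * b⁻¹ := by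
      field_simp; ring
    have hb2 : 0 ≤ (b - 1) ^ 2 * b⁻¹ := by positivity
    by_cases hba : F ≤ b ∧ b ≤ E
    · obtain ⟨hb1, hb3⟩ := hba
      have haF : F * F ≤ a := by rw [hac]; gcongr
      have haE : a ≤ E * E := by rw [hac]; gcongr
      have hy : 1 ≤ (c * y1) ^ 2 ∨ 1 ≤ (c * y2) ^ 2 := by
        by_contra hcon
        push Not at hcon
        apply hx
        have k1 := abs_lt_of_sq_lt_sq (show (c * y1) ^ 2 < 1 ^ 2 by linarith [hcon.1]) zero_le_one
        have k2 := abs_lt_of_sq_lt_sq (show (c * y2) ^ 2 < 1 ^ 2 by linarith [hcon.2]) zero_le_one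
        rw [abs_lt] at k1 k2
        refine ⟨⟨?_, ?_⟩, ⟨?_, ?_⟩, haF, haE⟩ <;> linarith
      have hsum : 1 ≤ c ^ 2 * (y1 ^ 2 + y2 ^ 2) := by
        have hexp : c ^ 2 * (y1 ^ 2 + y2 ^ 2) = (c * y1) ^ 2 + (c * y2) ^ 2 := by ring
        rw [hexp]
        rcases hy with h | h <;> linarith [sq_nonneg (c * y1), sq_nonneg (c * y2)]
      have hcc : c ^ 2 ≤ 9 := by nlinarith
      have hs9 : 1 / 9 ≤ y1 ^ 2 + y2 ^ 2 := by nlinarith [sq_nonneg y1, sq_nonneg y2]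
      have hb3' : 1 / 3 ≤ b⁻¹ := by nlinarith
      nlinarith
    · have : 1 / 27 ≤ (b - 1) ^ 2 * b⁻¹ := by
        rw [← div_eq_mul_inv, le_div_iff₀ hb]
        rw [not_and_or] at hba
        rcases hba with h | h
        · have h' : b < 1 / 2 := by linarith
          nlinarith
        · have h' : 2.7 < b := by linarith
          nlinarith
      linarith
  refine ⟨by linarith, ?_⟩
  have hci : c * c⁻¹ = 1 := mul_inv_cancel₀ hc0.ne'
  have hX : a + a⁻¹ + a⁻¹ * (x1 ^ 2 + x2 ^ 2) = (1 + a ^ 2 + (x1 ^ 2 + x2 ^ 2)) / (b * c) := by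
    rw [hac]; field_simp; ring
  have hY : b + b⁻¹ + b⁻¹ * (y1 ^ 2 + y2 ^ 2) = (1 + b ^ 2 + (y1 ^ 2 + y2 ^ 2)) / b := by
    field_simp; ring
  rw [hX, hY]
  have hx1 : x1 ^ 2 ≤ 2 + 2 * (c * y1) ^ 2 := by
    nlinarith [sq_nonneg (x1 - 2 * (c * y1))]
  have hx2 : x2 ^ 2 ≤ 2 + 2 * (c * y2) ^ 2 := by
    nlinarith [sq_nonneg (x2 - 2 * (c * y2))]
  have hmain : 1 + a ^ 2 + (x1 ^ 2 + x2 ^ 2) ≤ 135 * c * (1 + b ^ 2 + (y1 ^ 2 + y2 ^ 2)) := by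
    have h5 : (5:ℝ) ≤ 135 * c := by linarith
    have hcc : 2 * c ^ 2 ≤ 135 * c := by nlinarith
    have hab : a ^ 2 ≤ 135 * c * b ^ 2 := by
      have hq : c ^ 2 ≤ 135 * c := by linarith [sq_nonneg c]
      calc a ^ 2 = c ^ 2 * b ^ 2 := by rw [hac]; ring
        _ ≤ 135 * c * b ^ 2 := mul_le_mul_of_nonneg_right hq (sq_nonneg b)
    have hs : 2 * c ^ 2 * (y1 ^ 2 + y2 ^ 2) ≤ 135 * c * (y1 ^ 2 + y2 ^ 2) := by gcongr
    linarith
  have : (1 + a ^ 2 + (x1 ^ 2 + x2 ^ 2)) / (b * c) ≤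
      135 * ((1 + b ^ 2 + (y1 ^ 2 + y2 ^ 2)) / b) := by
    rw [div_le_iff₀ (by positivity)]
    calc _ ≤ _ := hmain
      _ = _ := by field_simp
  linarith

/-- The support set of the integrand. -/
def Tset (x1 x2 a : ℝ) : Set G :=
  {y | (y.2.2 / a * (x1 - 1) ≤ y.1 ∧ y.1 ≤ y.2.2 / a * (x1 + 1)) ∧
    (y.2.2 / a * (x2 - 1) ≤ y.2.1 ∧ y.2.1 ≤ y.2.2 / a * (x2 + 1)) ∧ a / 3 ≤ y.2.2 ∧ y.2.2 ≤ 3 * a}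

lemma meas_Tset (x1 x2 a : ℝ) : MeasurableSet (Tset x1 x2 a) := by
  have h1 : MeasurableSet {y : G | y.2.2 / a * (x1 - 1) ≤ y.1} :=
    measurableSet_le (by fun_prop) (by fun_prop)
  have h2 : MeasurableSet {y : G | y.1 ≤ y.2.2 / a * (x1 + 1)} :=
    measurableSet_le (by fun_prop) (by fun_prop)
  have h3 : MeasurableSet {y : G | y.2.2 / a * (x2 - 1) ≤ y.2.1} :=
    measurableSet_le (by fun_prop) (by fun_prop)
  have h4 : MeasurableSet {y : G | y.2.1 ≤ y.2.2 / a * (x2 + 1)} :=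
    measurableSet_le (by fun_prop) (by fun_prop)
  have h5 : MeasurableSet {y : G | a / 3 ≤ y.2.2} :=
    measurableSet_le (by fun_prop) (by fun_prop)
  have h6 : MeasurableSet {y : G | y.2.2 ≤ 3 * a} :=
    measurableSet_le (by fun_prop) (by fun_prop)
  exact (h1.inter h2).inter ((h3.inter h4).inter (h5.inter h6))

/-- Fubini bound for a set whose sections are small. -/
lemma section_bound {α β : Type*} [MeasureSpace α] [MeasureSpace β]
    [SFinite (volume : Measure α)] [SFinite (volume : Measure β)]
    (S : Set (α × β)) (hS : MeasurableSet S) (B : Set β) (hB : MeasurableSet B) (k : ℝ≥0∞)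
    (h : ∀ y ∈ B, volume ((fun z => (z, y)) ⁻¹' S) ≤ k)
    (h' : ∀ p ∈ S, p.2 ∈ B) : volume S ≤ k * volume B := by
  rw [Measure.volume_eq_prod, Measure.prod_apply_symm hS]
  calc ∫⁻ y, volume ((fun z => (z, y)) ⁻¹' S) ≤ ∫⁻ y, B.indicator (fun _ => k) y := by
        apply lintegral_mono
        intro y
        by_cases hy : y ∈ B
        · simpa [hy] using h y hy
        · have : (fun z : α => (z, y)) ⁻¹' S = ∅ := by
            ext z; simp only [mem_preimage, mem_empty_iff_false, iff_false]
            exact fun hz => hy (h' _ hz)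
          simp [this]
    _ = k * volume B := by rw [lintegral_indicator_const hB]

lemma interval_bound (x1 a b : ℝ) (ha : 0 < a) (hb : b ≤ 3 * a) :
    volume (Icc (b / a * (x1 - 1)) (b / a * (x1 + 1))) ≤ ENNReal.ofReal 6 := by
  rw [Real.volume_Icc]
  apply ENNReal.ofReal_le_ofReal
  have : b / a ≤ 3 := by rw [div_le_iff₀ ha]; exact hb
  nlinarith

lemma vol_Tset (x1 x2 a : ℝ) (ha : 0 < a) :
    volume (Tset x1 x2 a) ≤ ENNReal.ofReal (108 * a) := by
  let B : Set (ℝ × ℝ) := {q | (q.2 / a * (x2 - 1) ≤ q.1 ∧ q.1 ≤ q.2 / a * (x2 + 1)) ∧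
    a / 3 ≤ q.2 ∧ q.2 ≤ 3 * a}
  have hB : MeasurableSet B := by
    have h3 : MeasurableSet {q : ℝ × ℝ | q.2 / a * (x2 - 1) ≤ q.1} :=
      measurableSet_le (by fun_prop) (by fun_prop)
    have h4 : MeasurableSet {q : ℝ × ℝ | q.1 ≤ q.2 / a * (x2 + 1)} :=
      measurableSet_le (by fun_prop) (by fun_prop)
    have h5 : MeasurableSet {q : ℝ × ℝ | a / 3 ≤ q.2} :=
      measurableSet_le (by fun_prop) (by fun_prop)
    have h6 : MeasurableSet {q : ℝ × ℝ | q.2 ≤ 3 * a} :=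
      measurableSet_le (by fun_prop) (by fun_prop)
    exact (h3.inter h4).inter (h5.inter h6)
  have h1 : volume (Tset x1 x2 a) ≤ ENNReal.ofReal 6 * volume B := by
    apply section_bound _ (meas_Tset x1 x2 a) B hB
    · intro q hq
      exact (measure_mono (fun z hz => hz.1)).trans (interval_bound x1 a q.2 ha hq.2.2)
    · exact fun p hp => hp.2
  have h2 : volume B ≤ ENNReal.ofReal 6 * volume (Icc (a / 3) (3 * a)) := by
    apply section_bound _ hB _ measurableSet_Icc
    · intro q hq
      exact (measure_mono (fun z hz => hz.1)).trans (interval_bound x2 a q ha hq.2)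
    · exact fun p hp => hp.2
  calc volume (Tset x1 x2 a)
      ≤ ENNReal.ofReal 6 * (ENNReal.ofReal 6 * ENNReal.ofReal (3 * a)) := by
        refine h1.trans ?_
        gcongr
        refine h2.trans ?_
        gcongr
        rw [Real.volume_Icc]
        exact ENNReal.ofReal_le_ofReal (by linarith)
    _ = ENNReal.ofReal (108 * a) := by
        rw [← ENNReal.ofReal_mul (by norm_num), ← ENNReal.ofReal_mul (by norm_num)]
        congr 1; ring

lemma rho_Tset (x1 x2 a : ℝ) (ha : 0 < a) : ρG (Tset x1 x2 a) ≤ ENNReal.ofReal 324 := by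
  rw [ρG, withDensity_apply _ (meas_Tset x1 x2 a)]
  calc _ ≤ ∫⁻ _ in Tset x1 x2 a, ENNReal.ofReal (3 / a) := by
        apply setLIntegral_mono measurable_const
        intro y hy
        apply ENNReal.ofReal_le_ofReal
        have h3 : a / 3 ≤ y.2.2 := hy.2.2.1
        have h0 : 0 < y.2.2 := by linarith [div_pos ha (by norm_num : (0:ℝ) < 3)]
        rw [if_pos h0, inv_le_comm₀ h0 (by positivity), inv_div]
        exact h3
    _ = ENNReal.ofReal (3 / a) * volume (Tset x1 x2 a) := by
        rw [setLIntegral_const]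
    _ ≤ ENNReal.ofReal (3 / a) * ENNReal.ofReal (108 * a) := by
        gcongr; exact vol_Tset x1 x2 a ha
    _ = ENNReal.ofReal 324 := by
        rw [← ENNReal.ofReal_mul (by positivity)]
        congr 1; field_simp; norm_num

lemma pos_of_mem (x y : G) (ha : 0 < x.2.2) (hz : gMul x (gInv y) ∈ R0set) : 0 < y.2.2 := by
  have h : Real.exp (-1) ≤ x.2.2 * (1 / y.2.2) := hz.2.2.1
  have h0 : 0 < x.2.2 * (1 / y.2.2) := (Real.exp_pos _).trans_le h
  have := (mul_pos_iff_of_pos_left ha).1 h0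
  exact one_div_pos.1 this

lemma mem_Tset (x y : G) (ha : 0 < x.2.2) (hz : gMul x (gInv y) ∈ R0set) :
    y ∈ Tset x.1 x.2.1 x.2.2 := by
  have hb := pos_of_mem x y ha hz
  obtain ⟨x1, x2, a⟩ := x
  obtain ⟨y1, y2, b⟩ := y
  simp only [gMul, gInv, R0set, Tset, mem_prod, mem_Icc, mem_ofPred_eq] at *
  obtain ⟨⟨hz1, hz1'⟩, ⟨hz2, hz2'⟩, hc, hc'⟩ := hz
  have e1 : Real.exp 1 < 3 := Real.exp_one_lt_three
  have e3 : Real.exp (-1) * Real.exp 1 = 1 := by rw [← Real.exp_add]; simp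
  have hF0 : 0 < Real.exp (-1) := Real.exp_pos _
  have hF3 : 1 / 3 ≤ Real.exp (-1) := by nlinarith
  have hd : 0 < b / a := by positivity
  have k1 : y1 = b / a * (-(a * (-y1 / b))) := by field_simp
  have k2 : y2 = b / a * (-(a * (-y2 / b))) := by field_simp
  have g1 : a * (1 / b) ≤ 3 := by linarith
  have g2 : 1 / 3 ≤ a * (1 / b) := by linarith
  rw [mul_one_div, div_le_iff₀ hb] at g1
  rw [mul_one_div, le_div_iff₀ hb] at g2
  refine ⟨⟨?_, ?_⟩, ⟨?_, ?_⟩, by linarith, by linarith⟩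
  · rw [k1]; exact mul_le_mul_of_nonneg_left (by field_simp at *; linarith) hd.le
  · rw [k1]; exact mul_le_mul_of_nonneg_left (by field_simp at *; linarith) hd.le
  · rw [k2]; exact mul_le_mul_of_nonneg_left (by field_simp at *; linarith) hd.le
  · rw [k2]; exact mul_le_mul_of_nonneg_left (by field_simp at *; linarith) hd.le

lemma rG_pos (x : G) (ha : 0 < x.2.2) (hx : x ∉ twoR0set) : 0 < rG x := by
  apply Real.arcosh_pos
  rcases (one_le_coshArg_s15 x ha).lt_or_eq with h | h
  · exact h
  · exfalso
    apply hx
    obtain ⟨x1, x2, a⟩ := x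
    simp only [coshArg, twoR0set, mem_prod, mem_Icc] at *
    have h1 : (a - 1) ^ 2 + (x1 ^ 2 + x2 ^ 2) = 0 := by
      field_simp at h; linarith
    have ha1 : a = 1 := by nlinarith [sq_nonneg (a - 1), sq_nonneg x1, sq_nonneg x2]
    have h2 : x1 = 0 := by nlinarith [sq_nonneg (a - 1), sq_nonneg x1, sq_nonneg x2]
    have h3 : x2 = 0 := by nlinarith [sq_nonneg (a - 1), sq_nonneg x1, sq_nonneg x2]
    subst ha1 h2 h3
    norm_num

theorem maxHeat_indicator_R0_bound :
    ∃ C > (0 : ℝ), ∀ x : G, 0 < x.2.2 → x ∉ twoR0set →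
      maxHeat (R0set.indicator fun _ => (1 : ℝ)) x ≤
        ENNReal.ofReal (C * Real.sqrt (deltaG x) / (rG x ^ 2 * Real.sinh (rG x))) := by
  refine ⟨324 * (72 * (3721 * 810)), by norm_num, ?_⟩
  intro x ha hx
  unfold maxHeat
  refine iSup₂_le fun t ht => ENNReal.ofReal_le_ofReal ?_
  have hrx := rG_pos x ha hx
  have hshx : 0 < Real.sinh (rG x) := Real.sinh_pos_iff.2 hrx
  have hsq : Real.sqrt (deltaG x) = x.2.2⁻¹ := by
    rw [deltaG, ← inv_pow]; exact Real.sqrt_sq (inv_nonneg.2 ha.le)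
  have hai : 0 < x.2.2⁻¹ := inv_pos.2 ha
  rw [hsq]
  set K : ℝ := 72 * (3721 * 810) * x.2.2⁻¹ / (rG x ^ 2 * Real.sinh (rG x)) with hK
  have hK0 : 0 ≤ K := by positivity
  set T := Tset x.1 x.2.1 x.2.2 with hT
  have hTm : MeasurableSet T := meas_Tset _ _ _
  have hTr : ρG T ≤ ENNReal.ofReal 324 := rho_Tset _ _ _ ha
  have hTfin : ρG T ≠ ⊤ := (hTr.trans_lt ENNReal.ofReal_lt_top).ne
  have hpt : ∀ y, ‖R0set.indicator (fun _ => (1 : ℝ)) (gMul x (gInv y)) * heatK t y‖ ≤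
      T.indicator (fun _ => K) y := by
    intro y
    by_cases hz : gMul x (gInv y) ∈ R0set
    · have hyT : y ∈ T := mem_Tset x y ha hz
      have hb := pos_of_mem x y ha hz
      rw [indicator_of_mem hz, indicator_of_mem hyT, one_mul, Real.norm_eq_abs]
      obtain ⟨g1, g2⟩ := geom x y ha hx hb hz
      rw [← cosh_rG_s15 y hb] at g1 g2
      rw [← cosh_rG_s15 x ha] at g2
      obtain ⟨hq, hcmp⟩ := radius_compare _ _ (rG_nonneg_s15 x ha) (rG_nonneg_s15 y hb) g1 g2
      refine (heatK_bound t y ht hq hb).trans ?_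
      have hshy : 0 < Real.sinh (rG y) := Real.sinh_pos_iff.2 hq
      have hby : y.2.2⁻¹ ≤ 3 * x.2.2⁻¹ := by
        have h3 : x.2.2 / 3 ≤ y.2.2 := hyT.2.2.1
        rw [inv_le_comm₀ hb (by positivity), mul_inv, inv_inv]
        linarith
      rw [hK, div_le_div_iff₀ (by positivity) (by positivity)]
      calc 24 * y.2.2⁻¹ * (rG x ^ 2 * Real.sinh (rG x))
          ≤ 24 * (3 * x.2.2⁻¹) * ((3721 * 810) * (rG y ^ 2 * Real.sinh (rG y))) := by
            gcongr
        _ = _ := by ring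
    · rw [indicator_of_notMem hz, zero_mul, norm_zero]
      exact indicator_nonneg (fun _ _ => hK0) y
  have hint : Integrable (T.indicator (fun _ => K)) ρG :=
    (integrable_indicator_iff hTm).2 (integrableOn_const hTfin)
  have hle := norm_integral_le_of_norm_le hint (Eventually.of_forall hpt)
  rw [integral_indicator_const _ hTm, smul_eq_mul] at hle
  have hreal : ρG.real T ≤ 324 := by
    have := ENNReal.toReal_mono ENNReal.ofReal_ne_top hTr
    rwa [ENNReal.toReal_ofReal (by norm_num)] at this
  rw [← Real.norm_eq_abs]
  calc ‖convHeat (R0set.indicator fun _ => (1 : ℝ)) t x‖ ≤ ρG.real T * K := hle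
    _ ≤ 324 * K := by gcongr
    _ = _ := by rw [hK]; ring
end
end
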